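/- arXiv:1209.1578 — 5 statements merged into one kernel-verified Lean document; each statement's English description precedes it below -/
import Mathlib

section
/- Let m, p be positive integers and let α be a p×m complex matrix and β an m×p complex matrix, viewed as linear maps α : ℂ^m → ℂ^p and β : ℂ^p → ℂ^m. Consider the action of SL(m,ℂ) given by α ↦ α g⁻¹, β ↦ g β. Then the orbit of (α, β) is a closed subset of the product of the two matrix spaces (with the standard topology) if and only if (1) α is injective, or (2) β is surjective, or (3) ℂ^m is the internal direct sum of ker α and the range of β (i.e., ker α ∩ range β = 0 and ker α + range β = ℂ^m). -/
open Matrix in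
lemma vecMulVec_zero' {m p : ℕ} (u : Fin m → ℂ) : vecMulVec u (0 : Fin p → ℂ) = 0 := by
  ext i j; simp [vecMulVec_apply]

open Matrix in
/-- Determinant of a rank one perturbation of the identity. -/
lemma det_rankOne {m : ℕ} (c : ℂ) (u φ : Fin m → ℂ) (h : φ ⬝ᵥ u = 1) :
    (1 + (c - 1) • vecMulVec u φ).det = c := by
  rw [← smul_vecMulVec, vecMulVec_eq Unit, det_one_add_replicateCol_mul_replicateRow,
    dotProduct_smul, h]
  simp

open Matrix in
/-- A row vector vanishing on a subspace and equal to one at a vector outside. -/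
lemma exists_row {m : ℕ} (P : Submodule ℂ (Fin m → ℂ)) (v : Fin m → ℂ) (hv : v ∉ P) :
    ∃ ψ : Fin m → ℂ, ψ ⬝ᵥ v = 1 ∧ ∀ w ∈ P, ψ ⬝ᵥ w = 0 := by
  obtain ⟨f, hf, hP⟩ := Submodule.exists_le_ker_of_notMem hv
  have key : ∀ w, (fun i => (f v)⁻¹ * f (Pi.single i 1)) ⬝ᵥ w = (f v)⁻¹ * f w := by
    intro w
    conv_rhs => rw [LinearMap.pi_apply_eq_sum_univ f w]
    simp only [dotProduct, Finset.mul_sum, smul_eq_mul]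
    refine Finset.sum_congr rfl fun i _ => ?_
    have : (Pi.single i 1 : Fin m → ℂ) = fun j => if i = j then 1 else 0 := by
      ext j; simp [Pi.single_apply, eq_comm]
    rw [this]; ring
  refine ⟨_, (key v).trans (inv_mul_cancel₀ hf), fun w hw => (key w).trans ?_⟩
  have : f w = 0 := hP hw
  simp [this]

open Matrix in
/-- The orbit. -/
def Orb {m p : ℕ} (α : Matrix (Fin p) (Fin m) ℂ) (β : Matrix (Fin m) (Fin p) ℂ) :
    Set (Matrix (Fin p) (Fin m) ℂ × Matrix (Fin m) (Fin p) ℂ) :=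
  {q | ∃ g : Matrix.SpecialLinearGroup (Fin m) ℂ,
          q = (α * (↑(g⁻¹) : Matrix (Fin m) (Fin m) ℂ),
               (↑g : Matrix (Fin m) (Fin m) ℂ) * β)}

open Matrix in
lemma mem_Orb {m p : ℕ} (α α' : Matrix (Fin p) (Fin m) ℂ) (β β' : Matrix (Fin m) (Fin p) ℂ) :
    (α', β') ∈ Orb α β ↔ ∃ g h : Matrix (Fin m) (Fin m) ℂ, g.det = 1 ∧ g * h = 1 ∧
      α' = α * h ∧ β' = g * β := by
  constructor
  · rintro ⟨g, hg⟩
    obtain ⟨h1, h2⟩ := Prod.mk.inj hg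
    refine ⟨(g : Matrix (Fin m) (Fin m) ℂ), ((g⁻¹ : SpecialLinearGroup (Fin m) ℂ) :
      Matrix (Fin m) (Fin m) ℂ), g.det_coe, ?_, h1, h2⟩
    have := congrArg (fun x : SpecialLinearGroup (Fin m) ℂ => (x : Matrix (Fin m) (Fin m) ℂ))
      (mul_inv_cancel g)
    exact (Matrix.SpecialLinearGroup.coe_mul _ _).symm.trans (this.trans Matrix.SpecialLinearGroup.coe_one)
  · rintro ⟨g, h, hd, hgh, rfl, rfl⟩
    obtain ⟨G, hG⟩ : ∃ G : SpecialLinearGroup (Fin m) ℂ, (G : Matrix (Fin m) (Fin m) ℂ) = g :=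
      ⟨⟨g, hd⟩, rfl⟩
    refine ⟨G, ?_⟩
    have h1 : ((G⁻¹ : SpecialLinearGroup (Fin m) ℂ) : Matrix (Fin m) (Fin m) ℂ) * g = 1 := by
      have := congrArg (fun x : SpecialLinearGroup (Fin m) ℂ => (x : Matrix (Fin m) (Fin m) ℂ))
        (inv_mul_cancel G)
      rw [← hG]
      exact (Matrix.SpecialLinearGroup.coe_mul _ _).symm.trans (this.trans Matrix.SpecialLinearGroup.coe_one)
    have h2 := left_inv_eq_right_inv h1 hgh
    rw [h2, hG]

open Matrix in
lemma limit_mem {m p : ℕ} (α : Matrix (Fin p) (Fin m) ℂ) (β : Matrix (Fin m) (Fin p) ℂ)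
    (hc : IsClosed (Orb α β)) (u v φ ψ : Fin m → ℂ) (hu : α *ᵥ u = 0) (hψ : ψ ᵥ* β = 0)
    (h1 : φ ⬝ᵥ u = 1) (h2 : φ ⬝ᵥ v = 0) (h3 : ψ ⬝ᵥ u = 0) (h4 : ψ ⬝ᵥ v = 1) :
    (α - vecMulVec (α *ᵥ v) ψ, β - vecMulVec u (φ ᵥ* β)) ∈ Orb α β := by
  let F : ℂ → Matrix (Fin p) (Fin m) ℂ × Matrix (Fin m) (Fin p) ℂ := fun t =>
    (α + (t - 1) • vecMulVec (α *ᵥ v) ψ, β + (t - 1) • vecMulVec u (φ ᵥ* β))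
  have hF : Continuous F := by fun_prop
  have hne : ∀ t : ℂ, t ≠ 0 → F t ∈ Orb α β := by
    intro t ht
    refine (mem_Orb _ _ _ _).2 ⟨(1 + (t - 1) • vecMulVec u φ) * (1 + (t⁻¹ - 1) • vecMulVec v ψ),
      (1 + (t - 1) • vecMulVec v ψ) * (1 + (t⁻¹ - 1) • vecMulVec u φ), ?_, ?_, ?_, ?_⟩
    · rw [det_mul, det_rankOne _ _ _ h1, det_rankOne _ _ _ h4, mul_inv_cancel₀ ht]
    · have e1 : (1 + (t⁻¹ - 1) • vecMulVec v ψ) * (1 + (t - 1) • vecMulVec v ψ) = 1 := by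
        simp only [mul_add, add_mul, one_mul, mul_one, smul_mul_assoc, mul_smul_comm,
          vecMulVec_mul_vecMulVec, h4, one_smul]
        match_scalars
        · ring
        · field_simp; ring
      have e2 : (1 + (t - 1) • vecMulVec u φ) * (1 + (t⁻¹ - 1) • vecMulVec u φ) = 1 := by
        simp only [mul_add, add_mul, one_mul, mul_one, smul_mul_assoc, mul_smul_comm,
          vecMulVec_mul_vecMulVec, h1, one_smul]
        match_scalars
        · ring
        · field_simp; ring
      rw [mul_assoc, ← mul_assoc (1 + (t⁻¹ - 1) • vecMulVec v ψ), e1, one_mul, e2]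
    · have e1 : α * (1 + (t - 1) • vecMulVec v ψ) = α + (t - 1) • vecMulVec (α *ᵥ v) ψ := by
        rw [Matrix.mul_add, Matrix.mul_one, Matrix.mul_smul, mul_vecMulVec]
      rw [← Matrix.mul_assoc, e1, Matrix.mul_add, Matrix.mul_one, Matrix.mul_smul, mul_vecMulVec,
        add_mulVec, smul_mulVec, vecMulVec_mulVec, h3, hu]
      simp
    · have e1 : (1 + (t⁻¹ - 1) • vecMulVec v ψ) * β = β := by
        rw [Matrix.add_mul, Matrix.one_mul, Matrix.smul_mul, vecMulVec_mul, hψ, vecMulVec_zero']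
        simp
      rw [Matrix.mul_assoc, e1, Matrix.add_mul, Matrix.one_mul, Matrix.smul_mul, vecMulVec_mul]
  have hall : F 0 ∈ Orb α β := by
    have hd : Dense ({0}ᶜ : Set ℂ) := dense_compl_singleton 0
    have hcl : IsClosed (F ⁻¹' Orb α β) := hc.preimage hF
    have : closure ({0}ᶜ : Set ℂ) ⊆ F ⁻¹' Orb α β := hcl.closure_subset_iff.2 fun t ht => hne t ht
    exact this (hd 0)
  simpa [F, sub_eq_add_neg] using hall

open Matrix in
lemma forward {m p : ℕ} (α : Matrix (Fin p) (Fin m) ℂ) (β : Matrix (Fin m) (Fin p) ℂ)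
    (hc : IsClosed (Orb α β)) (hα : ¬ Function.Injective α.mulVecLin)
    (hβ : ¬ Function.Surjective β.mulVecLin) :
    IsCompl (LinearMap.ker α.mulVecLin) (LinearMap.range β.mulVecLin) := by
  have aux : ∀ u v ψ : Fin m → ℂ, u ≠ 0 → ψ ⬝ᵥ u = 0 → ψ ⬝ᵥ v = 1 → ∃ φ : Fin m → ℂ,
      φ ⬝ᵥ u = 1 ∧ φ ⬝ᵥ v = 0 := by
    intro u v ψ hu h3 h4
    have : u ∉ Submodule.span ℂ {v} := by
      rw [Submodule.mem_span_singleton]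
      rintro ⟨c, rfl⟩
      rw [dotProduct_smul, h4] at h3
      apply hu
      have : c = 0 := by simpa using h3
      simp [this]
    obtain ⟨φ, h1, h2⟩ := exists_row _ u this
    exact ⟨φ, h1, h2 v (Submodule.mem_span_singleton_self v)⟩
  have vm : ∀ ψ : Fin m → ℂ, (∀ w ∈ LinearMap.range β.mulVecLin, ψ ⬝ᵥ w = 0) → ψ ᵥ* β = 0 := by
    intro ψ h
    apply dotProduct_eq
    intro w
    rw [← dotProduct_mulVec, zero_dotProduct]
    exact h _ ⟨w, rfl⟩
  constructor
  · rw [Submodule.disjoint_def]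
    by_contra hcon
    push Not at hcon
    obtain ⟨u, huU, huW, hu0⟩ := hcon
    have : ∃ v, v ∉ LinearMap.range β.mulVecLin := by
      by_contra h; push Not at h; exact hβ h
    obtain ⟨v, hv⟩ := this
    obtain ⟨ψ, h4, hψ⟩ := exists_row _ v hv
    obtain ⟨φ, h1, h2⟩ := aux u v ψ hu0 (hψ u huW) h4
    have := limit_mem α β hc u v φ ψ (by simpa using huU) (vm ψ hψ) h1 h2 (hψ u huW) h4
    obtain ⟨g, h, -, hgh, -, hb⟩ := (mem_Orb _ _ _ _).1 this
    obtain ⟨x, hx⟩ := huW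
    have hx : β *ᵥ x = u := hx
    have h0 : (g * β) *ᵥ x = 0 := by
      rw [← hb, sub_mulVec, vecMulVec_mulVec, ← dotProduct_mulVec, hx, h1]; simp
    rw [← mulVec_mulVec, hx] at h0
    have : (h * g) *ᵥ u = 0 := by rw [← mulVec_mulVec, h0, mulVec_zero]
    rw [mul_eq_one_comm.1 hgh, one_mulVec] at this
    exact hu0 this
  · rw [codisjoint_iff]
    by_contra hcon
    have : ∃ v, v ∉ LinearMap.ker α.mulVecLin ⊔ LinearMap.range β.mulVecLin := by
      by_contra h; push Not at h; exact hcon (Submodule.eq_top_iff'.2 h)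
    obtain ⟨v, hv⟩ := this
    obtain ⟨ψ, h4, hψ⟩ := exists_row _ v hv
    have : ∃ u ∈ LinearMap.ker α.mulVecLin, u ≠ 0 := by
      apply Submodule.exists_mem_ne_zero_of_ne_bot
      intro h; exact hα (LinearMap.ker_eq_bot.1 h)
    obtain ⟨u, huU, hu0⟩ := this
    have h3 := hψ u (Submodule.mem_sup_left huU)
    obtain ⟨φ, h1, h2⟩ := aux u v ψ hu0 h3 h4
    have := limit_mem α β hc u v φ ψ (by simpa using huU)
      (vm ψ fun w hw => hψ w (Submodule.mem_sup_right hw)) h1 h2 h3 h4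
    obtain ⟨g, h, -, hgh, ha, -⟩ := (mem_Orb _ _ _ _).1 this
    have e : (α * h) *ᵥ (g *ᵥ v) = α *ᵥ v := by
      rw [mulVec_mulVec, Matrix.mul_assoc, mul_eq_one_comm.1 hgh, Matrix.mul_one]
    rw [← ha, sub_mulVec, vecMulVec_mulVec] at e
    have hk : g *ᵥ v - (1 + ψ ⬝ᵥ (g *ᵥ v)) • v ∈ LinearMap.ker α.mulVecLin := by
      rw [LinearMap.mem_ker, mulVecLin_apply, mulVec_sub, mulVec_smul, add_smul, one_smul]
      simp only [op_smul_eq_smul] at e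
      rw [sub_eq_iff_eq_add] at e
      rw [e]; simp
    have := hψ _ (Submodule.mem_sup_left hk)
    rw [dotProduct_sub, dotProduct_smul, h4] at this
    simp at this

open Matrix in
lemma closed_inj {m p : ℕ} (α : Matrix (Fin p) (Fin m) ℂ) (β : Matrix (Fin m) (Fin p) ℂ)
    (L : Matrix (Fin m) (Fin p) ℂ) (hL : L * α = 1) : IsClosed (Orb α β) := by
  have : Orb α β = {q | (L * q.1).det = 1 ∧ q.1 = α * (L * q.1) ∧ (L * q.1) * q.2 = β} := by
    ext ⟨a, b⟩
    rw [mem_Orb]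
    constructor
    · rintro ⟨g, h, hd, hgh, rfl, rfl⟩
      have e : L * (α * h) = h := by rw [← Matrix.mul_assoc, hL, Matrix.one_mul]
      refine ⟨?_, ?_, ?_⟩
      · simp only [e]
        have := congrArg det hgh
        rwa [det_mul, hd, one_mul, det_one] at this
      · simp only [e]
      · simp only [e]
        rw [← Matrix.mul_assoc, mul_eq_one_comm.1 hgh, Matrix.one_mul]
    · rintro ⟨hd, h1, h2⟩
      simp only at hd h1 h2
      have hu : IsUnit (L * a).det := by rw [hd]; exact isUnit_one
      refine ⟨(L * a)⁻¹, L * a, ?_, nonsing_inv_mul _ hu, h1, ?_⟩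
      · rw [det_nonsing_inv, hd]; simp
      · rw [← h2, ← Matrix.mul_assoc, nonsing_inv_mul _ hu, Matrix.one_mul]
  rw [this]
  refine IsClosed.inter (isClosed_eq (by fun_prop) (by fun_prop))
    (IsClosed.inter (isClosed_eq (by fun_prop) (by fun_prop))
      (isClosed_eq (by fun_prop) (by fun_prop)))

open Matrix in
lemma closed_surj {m p : ℕ} (α : Matrix (Fin p) (Fin m) ℂ) (β : Matrix (Fin m) (Fin p) ℂ)
    (R : Matrix (Fin p) (Fin m) ℂ) (hR : β * R = 1) : IsClosed (Orb α β) := by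
  have : Orb α β = {q | (q.2 * R).det = 1 ∧ q.2 = (q.2 * R) * β ∧ q.1 * (q.2 * R) = α} := by
    ext ⟨a, b⟩
    rw [mem_Orb]
    constructor
    · rintro ⟨g, h, hd, hgh, rfl, rfl⟩
      have e : g * β * R = g := by rw [Matrix.mul_assoc, hR, Matrix.mul_one]
      refine ⟨?_, ?_, ?_⟩
      · simp only [e, hd]
      · simp only [e]
      · simp only [e]
        rw [Matrix.mul_assoc, mul_eq_one_comm.1 hgh, Matrix.mul_one]
    · rintro ⟨hd, h1, h2⟩
      simp only at hd h1 h2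
      have hu : IsUnit (b * R).det := by rw [hd]; exact isUnit_one
      refine ⟨b * R, (b * R)⁻¹, hd, mul_nonsing_inv _ hu, ?_, h1⟩
      rw [← h2, Matrix.mul_assoc, mul_nonsing_inv _ hu, Matrix.mul_one]
  rw [this]
  refine IsClosed.inter (isClosed_eq (by fun_prop) (by fun_prop))
    (IsClosed.inter (isClosed_eq (by fun_prop) (by fun_prop))
      (isClosed_eq (by fun_prop) (by fun_prop)))

/-- Gluing isomorphisms along a decomposition into kernel and range. -/
lemma glue {V X Y : Type*} [AddCommGroup V] [Module ℂ V] [FiniteDimensional ℂ V]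
    [AddCommGroup X] [Module ℂ X] [AddCommGroup Y] [Module ℂ Y]
    (a a' : V →ₗ[ℂ] Y) (b b' : X →ₗ[ℂ] V)
    (hk : LinearMap.ker b = LinearMap.ker b') (hab : ∀ x, a (b x) = a' (b' x))
    (h : IsCompl (LinearMap.ker a) (LinearMap.range b))
    (h' : IsCompl (LinearMap.ker a') (LinearMap.range b')) :
    ∃ e : V ≃ₗ[ℂ] V, (∀ x, e (b x) = b' x) ∧ ∀ v, a' (e v) = a v := by
  let eW : LinearMap.range b ≃ₗ[ℂ] LinearMap.range b' :=
    (b.quotKerEquivRange.symm.trans (Submodule.quotEquivOfEq _ _ hk)).trans b'.quotKerEquivRange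
  have heW : ∀ x, ((eW ⟨b x, ⟨x, rfl⟩⟩ : LinearMap.range b') : V) = b' x := by
    intro x
    have : b.quotKerEquivRange.symm ⟨b x, ⟨x, rfl⟩⟩ = Submodule.Quotient.mk x := by
      rw [LinearEquiv.symm_apply_eq]; ext; simp
    simp only [eW, LinearEquiv.trans_apply, this]
    simp
  have hfr : Module.finrank ℂ (LinearMap.ker a) = Module.finrank ℂ (LinearMap.ker a') := by
    have e1 := Submodule.finrank_add_eq_of_isCompl h
    have e2 := Submodule.finrank_add_eq_of_isCompl h'
    have e3 := eW.finrank_eq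
    omega
  let eU : LinearMap.ker a ≃ₗ[ℂ] LinearMap.ker a' := LinearEquiv.ofFinrankEq _ _ hfr
  let e : V ≃ₗ[ℂ] V := ((Submodule.prodEquivOfIsCompl _ _ h).symm.trans
    (eU.prodCongr eW)).trans (Submodule.prodEquivOfIsCompl _ _ h')
  have he : ∀ (u : LinearMap.ker a) (w : LinearMap.range b), e (u + w) = (eU u : V) + eW w := by
    intro u w
    have : (Submodule.prodEquivOfIsCompl _ _ h).symm ((u : V) + w) = (u, w) := by
      rw [LinearEquiv.symm_apply_eq]; simp
    simp only [e, LinearEquiv.trans_apply, this]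
    simp
  have hb : ∀ x, e (b x) = b' x := by
    intro x
    have := he 0 ⟨b x, ⟨x, rfl⟩⟩
    rw [heW] at this
    simpa using this
  refine ⟨e, hb, fun v => ?_⟩
  have hv : v ∈ LinearMap.ker a ⊔ LinearMap.range b := by rw [h.sup_eq_top]; trivial
  obtain ⟨u, hu, w, ⟨x, rfl⟩, rfl⟩ := Submodule.mem_sup.1 hv
  have h1 := he ⟨u, hu⟩ 0
  simp only [ZeroMemClass.coe_zero, add_zero, map_zero] at h1
  rw [map_add, map_add, hb, h1, map_add, hab, (eU ⟨u, hu⟩).2, hu]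

open Matrix in
lemma closed_compl {m p : ℕ} (α : Matrix (Fin p) (Fin m) ℂ) (β : Matrix (Fin m) (Fin p) ℂ)
    (hα : ¬ Function.Injective α.mulVecLin)
    (h : IsCompl (LinearMap.ker α.mulVecLin) (LinearMap.range β.mulVecLin)) :
    IsClosed (Orb α β) := by
  have : Orb α β = {q | q.1 * q.2 = α * β ∧ (∀ x, β *ᵥ x = 0 → q.2 *ᵥ x = 0) ∧
      ∀ v, q.1 *ᵥ v ∈ LinearMap.range α.mulVecLin} := by
    ext ⟨a, b⟩
    rw [mem_Orb]
    constructor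
    · rintro ⟨g, h, hd, hgh, rfl, rfl⟩
      refine ⟨?_, ?_, ?_⟩
      · simp only
        rw [Matrix.mul_assoc, ← Matrix.mul_assoc h, mul_eq_one_comm.1 hgh, Matrix.one_mul]
      · intro x hx
        simp only
        rw [← mulVec_mulVec, hx, mulVec_zero]
      · intro v
        exact ⟨h *ᵥ v, by simp⟩
    · rintro ⟨h1, h2, h3⟩
      simp only at h1 h2 h3
      have hab : ∀ x, α *ᵥ (β *ᵥ x) = a *ᵥ (b *ᵥ x) := by
        intro x; rw [mulVec_mulVec, mulVec_mulVec, h1]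
      have hinj : ∀ x, α *ᵥ (β *ᵥ x) = 0 → β *ᵥ x = 0 := by
        intro x hx
        exact (Submodule.disjoint_def.1 h.disjoint) _ hx ⟨x, rfl⟩
      have hk : LinearMap.ker β.mulVecLin = LinearMap.ker b.mulVecLin := by
        ext x
        simp only [LinearMap.mem_ker, mulVecLin_apply]
        refine ⟨h2 x, fun hx => hinj x ?_⟩
        rw [hab, hx, mulVec_zero]
      have h' : IsCompl (LinearMap.ker a.mulVecLin) (LinearMap.range b.mulVecLin) := by
        constructor
        · rw [Submodule.disjoint_def]
          rintro _ hx ⟨x, rfl⟩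
          simp only [LinearMap.mem_ker, mulVecLin_apply] at hx ⊢
          rw [← hab] at hx
          exact h2 x (hinj x hx)
        · rw [codisjoint_iff, Submodule.eq_top_iff']
          intro v
          obtain ⟨y, hy⟩ := h3 v
          have hyt : y ∈ LinearMap.ker α.mulVecLin ⊔ LinearMap.range β.mulVecLin := by
            rw [h.sup_eq_top]; trivial
          obtain ⟨u, hu, w, ⟨x, rfl⟩, rfl⟩ := Submodule.mem_sup.1 hyt
          simp only [LinearMap.mem_ker, mulVecLin_apply] at hu hy
          rw [mulVec_add, hu, zero_add, hab] at hy
          refine Submodule.mem_sup.2 ⟨v - b *ᵥ x, ?_, b *ᵥ x, ⟨x, rfl⟩, by simp⟩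
          simp only [LinearMap.mem_ker, mulVecLin_apply]
          rw [mulVec_sub, hy, sub_self]
      obtain ⟨e, he1, he2⟩ := glue α.mulVecLin a.mulVecLin β.mulVecLin b.mulVecLin hk hab h h'
      let E : Matrix (Fin m) (Fin m) ℂ := LinearMap.toMatrix' e.toLinearMap
      have hE : ∀ v, E *ᵥ v = e v := fun v => LinearMap.toMatrix'_mulVec _ _
      have hEd : E.det ≠ 0 := by
        have := e.isUnit_det'
        rw [← LinearMap.det_toMatrix'] at this
        exact this.ne_zero
      have hEb : E * β = b := by
        apply Matrix.mulVec_injective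
        ext1 x
        rw [← mulVec_mulVec, hE]; exact he1 x
      have hEa : a * E = α := by
        apply Matrix.mulVec_injective
        ext1 x
        rw [← mulVec_mulVec, hE]; exact he2 x
      have : ∃ u ∈ LinearMap.ker α.mulVecLin, u ≠ 0 := by
        apply Submodule.exists_mem_ne_zero_of_ne_bot
        intro h; exact hα (LinearMap.ker_eq_bot.1 h)
      obtain ⟨u, hu, hu0⟩ := this
      obtain ⟨φ, hφ1, hφ2⟩ := exists_row (LinearMap.range β.mulVecLin) u
        fun hw => hu0 ((Submodule.disjoint_def.1 h.disjoint) _ hu hw)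
      have hu : α *ᵥ u = 0 := hu
      have hφ : φ ᵥ* β = 0 := by
        apply dotProduct_eq
        intro w
        rw [← dotProduct_mulVec, zero_dotProduct]
        exact hφ2 _ ⟨w, rfl⟩
      let G := E * (1 + (E.det⁻¹ - 1) • vecMulVec u φ)
      have hG : G.det = 1 := by
        simp only [G]
        rw [det_mul, det_rankOne _ _ _ hφ1, mul_inv_cancel₀ hEd]
      have hGu : IsUnit G.det := by rw [hG]; exact isUnit_one
      refine ⟨G, G⁻¹, hG, mul_nonsing_inv _ hGu, ?_, ?_⟩
      · have : a * G = α := by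
          simp only [G]
          rw [← Matrix.mul_assoc, hEa, Matrix.mul_add, Matrix.mul_smul, mul_vecMulVec, hu]
          simp
        rw [← this, Matrix.mul_assoc, mul_nonsing_inv _ hGu, Matrix.mul_one]
      · simp only [G]
        rw [Matrix.mul_assoc, Matrix.add_mul, Matrix.smul_mul, vecMulVec_mul, hφ, Matrix.one_mul,
          ← hEb]
        simp only [vecMulVec_zero', smul_zero, add_zero]
  rw [this]
  refine IsClosed.inter (isClosed_eq (by fun_prop) (by fun_prop)) (IsClosed.inter ?_ ?_)
  · have : {q : Matrix (Fin p) (Fin m) ℂ × Matrix (Fin m) (Fin p) ℂ |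
        ∀ x, β *ᵥ x = 0 → q.2 *ᵥ x = 0} = ⋂ x, ⋂ (_ : β *ᵥ x = 0), {q | q.2 *ᵥ x = 0} := by
      ext q; simp
    refine (congrArg IsClosed this).mpr <| isClosed_iInter fun x => isClosed_iInter fun _ => isClosed_eq ?_ continuous_const
    fun_prop
  · have : {q : Matrix (Fin p) (Fin m) ℂ × Matrix (Fin m) (Fin p) ℂ |
        ∀ v, q.1 *ᵥ v ∈ LinearMap.range α.mulVecLin} =
        ⋂ v, {q | q.1 *ᵥ v ∈ LinearMap.range α.mulVecLin} := by
      ext q; simp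
    refine (congrArg IsClosed this).mpr <| isClosed_iInter fun x => ?_
    have hcl : IsClosed (LinearMap.range α.mulVecLin : Set (Fin p → ℂ)) :=
      Submodule.closed_of_finiteDimensional _
    refine hcl.preimage (f := fun q : Matrix (Fin p) (Fin m) ℂ × Matrix (Fin m) (Fin p) ℂ =>
      q.1 *ᵥ x) ?_
    fun_prop

/-- For complex matrices `α : ℂ^m → ℂ^p` and `β : ℂ^p → ℂ^m`,
the orbit of `(α, β)` under the `SL(m, ℂ)`-action `α ↦ α g⁻¹`, `β ↦ g β` is
closed in the product of the two matrix spaces (standard topology) if and only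
if `α` is injective, or `β` is surjective, or `ℂ^m` is the internal direct sum
of `ker α` and `range β`. -/
theorem statement1 (m p : ℕ) (hm : 0 < m) (hp : 0 < p)
    (α : Matrix (Fin p) (Fin m) ℂ) (β : Matrix (Fin m) (Fin p) ℂ) :
    IsClosed {q : Matrix (Fin p) (Fin m) ℂ × Matrix (Fin m) (Fin p) ℂ |
        ∃ g : Matrix.SpecialLinearGroup (Fin m) ℂ,
          q = (α * (↑(g⁻¹) : Matrix (Fin m) (Fin m) ℂ),
               (↑g : Matrix (Fin m) (Fin m) ℂ) * β)} ↔
      (Function.Injective α.mulVecLin ∨ Function.Surjective β.mulVecLin ∨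
        IsCompl (LinearMap.ker α.mulVecLin) (LinearMap.range β.mulVecLin)) := by
  change IsClosed (Orb α β) ↔ _
  constructor
  · intro hc
    by_cases h1 : Function.Injective α.mulVecLin
    · exact Or.inl h1
    by_cases h2 : Function.Surjective β.mulVecLin
    · exact Or.inr (Or.inl h2)
    exact Or.inr (Or.inr (forward α β hc h1 h2))
  · intro h
    by_cases h1 : Function.Injective α.mulVecLin
    · obtain ⟨f, hf⟩ := LinearMap.exists_leftInverse_of_injective α.mulVecLin
        (LinearMap.ker_eq_bot.2 h1)
      refine closed_inj α β (LinearMap.toMatrix' f) ?_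
      have := congrArg LinearMap.toMatrix' hf
      have e : LinearMap.toMatrix' α.mulVecLin = α := LinearMap.toMatrix'_toLin' α
      rwa [LinearMap.toMatrix'_comp, LinearMap.toMatrix'_id, e] at this
    rcases h with h | h | h
    · exact absurd h h1
    · obtain ⟨R, hR⟩ := Matrix.mulVec_surjective_iff_exists_right_inverse.1 h
      exact closed_surj α β R hR
    · exact closed_compl α β h1 h
end

section
/- Fix integers 0 < n_1 < n_2 < … < n_r = n and set k_i = n_{i+1} − n_i. For i = 1,…,r−1 let β_i : ℂ^{n_{i+1}} → ℂ^{n_i} be the standard projection β_i = (0_{n_i×k_i} ∣ I_{n_i}) onto the last n_i coordinates. Let P be the subgroup of SL(n,ℂ) consisting of block upper triangular matrices with diagonal blocks of sizes k_{r−1}, k_{r−2}, …, k_1, n_1 (from top left to bottom right), i.e., the parabolic subgroup preserving the flag of coordinate subspaces spanned by the first n − n_{r−1}, n − n_{r−2}, …, n − n_1 standard basis vectors. Then for g ∈ SL(n,ℂ) the following are equivalent: (a) there exist g_i ∈ SL(n_i,ℂ) for i = 1,…,r−1 such that g_i β_i = β_i g_{i+1} for all i = 1,…,r−1 (with g_r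 = g); (b) g lies in the commutator subgroup [P,P] of P, equivalently g is block upper triangular with respect to these block sizes and each of its diagonal blocks has determinant 1. -/
/-- The standard surjection `β = (0_{a×(b-a)} ∣ I_a) : ℂ^b → ℂ^a`
(projection onto the last `a` coordinates, for `a ≤ b`). -/
def stdBeta (a b : ℕ) : Matrix (Fin a) (Fin b) ℂ :=
  Matrix.of fun j k => if (k : ℕ) = (j : ℕ) + (b - a) then 1 else 0

/-- Block upper triangularity of an `n × n` matrix (`n = dims (m+1)`) with
respect to the flag of coordinate subspaces spanned by the first
`n − dims s` standard basis vectors, `s = 1, …, m`; equivalently, with respect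
to the consecutive diagonal blocks of sizes
`dims (m+1) − dims m, …, dims 2 − dims 1, dims 1`. -/
def BlockUpperTriangularFlag (m : ℕ) (dims : ℕ → ℕ)
    (g : Matrix (Fin (dims (m+1))) (Fin (dims (m+1))) ℂ) : Prop :=
  ∀ s, 1 ≤ s → s ≤ m → ∀ p q : Fin (dims (m+1)),
    (q : ℕ) < dims (m+1) - dims s → dims (m+1) - dims s ≤ (p : ℕ) → g p q = 0

/-- The parabolic subgroup `P` of `SL(n, ℂ)` (with `n = dims (m+1)`) of block
upper triangular matrices for the above flag.  (Since the block upper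
triangular elements of `SL(n, ℂ)` form a subgroup, the subgroup they generate
has exactly them as elements.) -/
def parabolicP (m : ℕ) (dims : ℕ → ℕ) :
    Subgroup (Matrix.SpecialLinearGroup (Fin (dims (m+1))) ℂ) :=
  Subgroup.closure {h | BlockUpperTriangularFlag m dims ↑h}


section ParabolicHelpers

open Matrix
open scoped commutatorElement

variable {ι : Type*} [Fintype ι] [DecidableEq ι]

lemma aux_comm_transv {i j : ι} (hij : i ≠ j) (c : ℂ) :
    ⁅SpecialLinearGroup.diag2n hij (2 : ℂ) two_ne_zero, SpecialLinearGroup.transvection hij (c / 3)⁆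
      = SpecialLinearGroup.transvection hij c := by
  have key : SpecialLinearGroup.diag2n hij (2 : ℂ) two_ne_zero *
      SpecialLinearGroup.transvection hij (c / 3) =
      SpecialLinearGroup.transvection hij (4 * (c / 3)) *
        SpecialLinearGroup.diag2n hij (2 : ℂ) two_ne_zero := by
    apply Subtype.ext
    show diagonal (fun k ↦ if k = i then (2 : ℂ) else if k = j then (2 : ℂ)⁻¹ else 1) * (1 + single i j (c / 3)) =
      (1 + single i j (4 * (c / 3))) * diagonal (fun k ↦ if k = i then (2 : ℂ) else if k = j then (2 : ℂ)⁻¹ else 1)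
    ext p q
    simp only [Matrix.diagonal_mul, Matrix.mul_diagonal,
      Matrix.add_apply, Matrix.single_apply, Matrix.one_apply]
    split_ifs <;> grind
  rw [commutatorElement_def, key, mul_inv_cancel_right, SpecialLinearGroup.transvection_inv,
    ← SpecialLinearGroup.transvection_add]
  congr 1
  ring

lemma aux_diag_comm {i j : ι} (hij : i ≠ j) {c : ℂ} (hc : c ≠ 0) :
    SpecialLinearGroup.diag2n hij c hc ∈ commutator (SpecialLinearGroup ι ℂ) := by
  obtain ⟨a, ha⟩ := IsAlgClosed.exists_pow_nat_eq c (n := 2) (by norm_num)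
  have ha0 : a ≠ 0 := by rintro rfl; apply hc; rw [← ha]; simp
  let w : SpecialLinearGroup ι ℂ := SpecialLinearGroup.transvection hij 1 *
    SpecialLinearGroup.transvection hij.symm (-1) * SpecialLinearGroup.transvection hij 1
  have hw : (w : Matrix ι ι ℂ) = 1 + single i j 1 - single j i 1 - single i i 1 - single j j 1 := by
    show (1 + single i j (1 : ℂ)) * (1 + single j i (-1 : ℂ)) * (1 + single i j (1 : ℂ)) = _
    simp only [mul_add, add_mul,
      mul_one, one_mul, single_mul_single_same,
      single_mul_single_of_ne _ _ _ _ hij.symm, single_mul_single_of_ne _ _ _ _ hij]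
    have e1 : (single i j (-1 : ℂ)) = - single i j 1 := (single_neg ..).symm
    have e2 : (single i i (-1 : ℂ)) = - single i i 1 := (single_neg ..).symm
    have e3 : (single j i (-1 : ℂ)) = - single j i 1 := (single_neg ..).symm
    have e4 : (single j j (-1 : ℂ)) = - single j j 1 := (single_neg ..).symm
    simp only [e1, e2, e3, e4, zero_mul, add_zero, neg_mul, single_mul_single_same, mul_one]
    abel
  clear_value w
  have key : SpecialLinearGroup.diag2n hij a ha0 * w * SpecialLinearGroup.diag2n hij a ha0 = w := by
    apply Subtype.ext
    show diagonal (fun k ↦ if k = i then a else if k = j then a⁻¹ else 1) *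
      (w : Matrix ι ι ℂ) * diagonal (fun k ↦ if k = i then a else if k = j then a⁻¹ else 1) = (w : Matrix ι ι ℂ)
    rw [hw]
    ext p q
    simp only [Matrix.diagonal_mul, Matrix.mul_diagonal,
      Matrix.add_apply, Matrix.sub_apply, Matrix.single_apply, Matrix.one_apply]
    by_cases hpi : p = i <;> by_cases hpj : p = j <;> by_cases hqi : q = i <;>
      by_cases hqj : q = j <;> grind
  have hh : SpecialLinearGroup.diag2n hij c hc =
      ⁅SpecialLinearGroup.diag2n hij a ha0, w⁆ := by
    have k2 : w * (SpecialLinearGroup.diag2n hij a ha0)⁻¹ =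
        SpecialLinearGroup.diag2n hij a ha0 * w := by
      rw [mul_inv_eq_iff_eq_mul, key]
    rw [commutatorElement_def, mul_assoc _ w, k2, ← mul_assoc, mul_inv_cancel_right]
    apply Subtype.ext
    show diagonal (fun k ↦ if k = i then c else if k = j then c⁻¹ else 1) =
      diagonal (fun k ↦ if k = i then a else if k = j then a⁻¹ else 1) *
      diagonal (fun k ↦ if k = i then a else if k = j then a⁻¹ else 1)
    ext p q
    simp only [diagonal_mul_diagonal,
      diagonal_apply]
    split_ifs <;> grind
  rw [hh, commutator_def]
  exact Subgroup.commutator_mem_commutator (Subgroup.mem_top _) (Subgroup.mem_top _)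

/-- Block triangular part of SL. -/
def auxP (b : ι → ℕ) : Subgroup (SpecialLinearGroup ι ℂ) where
  carrier := {g | BlockTriangular (g : Matrix ι ι ℂ) b}
  mul_mem' := by
    intro x y hx hy
    exact BlockTriangular.mul hx hy
  one_mem' := blockTriangular_one
  inv_mem' := by
    intro x hx
    have : Invertible (x : Matrix ι ι ℂ) := Matrix.invertibleOfIsUnitDet _ (by simp)
    have h := blockTriangular_inv_of_blockTriangular (M := (x : Matrix ι ι ℂ)) hx
    have e : ((x⁻¹ : SpecialLinearGroup ι ℂ) : Matrix ι ι ℂ) = (x : Matrix ι ι ℂ)⁻¹ := by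
      symm
      apply Matrix.inv_eq_right_inv
      exact congrArg Subtype.val (mul_inv_cancel x)
    show BlockTriangular _ b
    rw [e]
    exact h

lemma mem_auxP (b : ι → ℕ) (g : SpecialLinearGroup ι ℂ) :
    g ∈ auxP b ↔ BlockTriangular (g : Matrix ι ι ℂ) b := Iff.rfl

lemma aux_commutator_top : commutator (SpecialLinearGroup ι ℂ) = ⊤ := by
  refine le_antisymm le_top fun A _ => ?_
  rcases subsingleton_or_nontrivial ι with h | h
  · have : A = 1 := by
      have : Subsingleton (SpecialLinearGroup ι ℂ) := inferInstance
      exact Subsingleton.elim _ _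
    rw [this]; exact one_mem _
  · refine SpecialLinearGroup.diagonal_transvection_induction' _ A
      (fun i j hij c hc => aux_diag_comm hij hc) (fun i j hij a => ?_) (fun _ _ => mul_mem)
    rw [← aux_comm_transv, commutator_def]
    exact Subgroup.commutator_mem_commutator (Subgroup.mem_top _) (Subgroup.mem_top _)

lemma aux_transv_mem {b : ι → ℕ} {i j : ι} (hij : i ≠ j) (hb : b i ≤ b j) (c : ℂ) :
    SpecialLinearGroup.transvection hij c ∈ ⁅auxP b, auxP b⁆ := by
  rw [← aux_comm_transv]
  have h1 : SpecialLinearGroup.diag2n hij (2 : ℂ) two_ne_zero ∈ auxP b :=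
    blockTriangular_diagonal (b := b) _
  have h2 : SpecialLinearGroup.transvection hij (c / 3) ∈ auxP b :=
    blockTriangular_transvection hb _
  exact Subgroup.commutator_mem_commutator h1 h2

/-- Embedding of a diagonal block. -/
def auxPhiM (b : ι → ℕ) (k : ℕ) (A : Matrix {i // b i = k} {i // b i = k} ℂ) : Matrix ι ι ℂ :=
  (fromBlocks A 0 0 (1 : Matrix {i // ¬ b i = k} {i // ¬ b i = k} ℂ)).submatrix
    (Equiv.sumCompl fun i => b i = k).symm (Equiv.sumCompl fun i => b i = k).symm

lemma auxPhiM_apply (b : ι → ℕ) (k : ℕ) (g : Matrix ι ι ℂ) (i j : ι) :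
    auxPhiM b k (g.toSquareBlock b k) i j =
      if b i = k ∧ b j = k then g i j else (1 : Matrix ι ι ℂ) i j := by
  unfold auxPhiM
  by_cases hi : b i = k <;> by_cases hj : b j = k
  · simp [hi, hj, Equiv.sumCompl_symm_apply_of_pos, toSquareBlock_def]
  · have : i ≠ j := by rintro rfl; exact hj hi
    simp [hi, hj, Equiv.sumCompl_symm_apply_of_pos, Equiv.sumCompl_symm_apply_of_neg, this]
  · have : i ≠ j := by rintro rfl; exact hi hj
    simp [hi, hj, Equiv.sumCompl_symm_apply_of_pos, Equiv.sumCompl_symm_apply_of_neg, this]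
  · simp [hi, hj, Equiv.sumCompl_symm_apply_of_neg, Matrix.one_apply]

/-- Embedding of a diagonal block as a group homomorphism. -/
def auxPhi (b : ι → ℕ) (k : ℕ) :
    SpecialLinearGroup {i // b i = k} ℂ →* SpecialLinearGroup ι ℂ where
  toFun A := ⟨auxPhiM b k A, by
    unfold auxPhiM
    rw [det_submatrix_equiv_self, det_fromBlocks_zero₂₁]; simp⟩
  map_one' := by
    apply Subtype.ext
    simp [auxPhiM]
  map_mul' x y := by
    apply Subtype.ext
    show auxPhiM b k ((x : Matrix _ _ ℂ) * (y : Matrix _ _ ℂ)) = auxPhiM b k x * auxPhiM b k y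
    unfold auxPhiM
    rw [submatrix_mul_equiv, fromBlocks_multiply]
    simp

lemma auxPhi_mem (b : ι → ℕ) (k : ℕ) (A : SpecialLinearGroup {i // b i = k} ℂ) :
    auxPhi b k A ∈ ⁅auxP b, auxP b⁆ := by
  have hA : A ∈ ⁅(⊤ : Subgroup (SpecialLinearGroup {i // b i = k} ℂ)), (⊤ : Subgroup (SpecialLinearGroup {i // b i = k} ℂ))⁆ := by
    have := Subgroup.mem_top A
    rw [← aux_commutator_top] at this
    exact this
  have h2 := Subgroup.mem_map_of_mem (auxPhi b k) hA
  rw [Subgroup.map_commutator] at h2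
  have h3 : Subgroup.map (auxPhi b k) ⊤ ≤ auxP b := by
    rintro _ ⟨B, -, rfl⟩
    intro i j hij
    show auxPhiM b k B i j = 0
    unfold auxPhiM
    by_cases hi : b i = k <;> by_cases hj : b j = k
    · omega
    · simp [hi, hj, Equiv.sumCompl_symm_apply_of_pos, Equiv.sumCompl_symm_apply_of_neg]
    · simp [hi, hj, Equiv.sumCompl_symm_apply_of_pos, Equiv.sumCompl_symm_apply_of_neg]
    · have : i ≠ j := by rintro rfl; exact lt_irrefl _ hij
      simp [hi, hj, Equiv.sumCompl_symm_apply_of_neg, this]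
  exact Subgroup.commutator_mono h3 h3 h2

/-- matrices underlying the commutator subgroup -/
def auxH (b : ι → ℕ) : Submonoid (Matrix ι ι ℂ) :=
  (⁅auxP b, auxP b⁆).toSubmonoid.map SpecialLinearGroup.coeMonoidHom

lemma auxH_coe {b : ι → ℕ} {g : SpecialLinearGroup ι ℂ} :
    (g : Matrix ι ι ℂ) ∈ auxH b ↔ g ∈ ⁅auxP b, auxP b⁆ := by
  constructor
  · rintro ⟨x, hx, h⟩
    have : x = g := Subtype.ext h
    exact this ▸ hx
  · intro h
    exact ⟨g, h, rfl⟩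

lemma aux_unip (b : ι → ℕ) (k : ℕ) (c : ι × ι → ℂ) (s : Finset (ι × ι))
    (hs : ∀ p ∈ s, b p.1 < k ∧ b p.2 = k) :
    (1 + ∑ p ∈ s, single p.1 p.2 (c p) : Matrix ι ι ℂ) ∈ auxH b := by
  induction s using Finset.induction_on with
  | empty => simp
  | insert x s hx ih =>
    have hx2 := hs x (Finset.mem_insert_self _ _)
    have ih' := ih fun p hp => hs p (Finset.mem_insert_of_mem hp)
    have hne : x.1 ≠ x.2 := by intro h; rw [h] at hx2; omega
    have hT := auxH_coe.2 (aux_transv_mem (b := b) hne (by omega) (c x))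
    have := mul_mem hT ih'
    rw [SpecialLinearGroup.transvection_coe] at this
    convert this using 1
    rw [Finset.sum_insert hx, add_mul, one_mul, mul_add, mul_one, Finset.mul_sum]
    have hz : ∑ p ∈ s, single x.1 x.2 (c x) * single p.1 p.2 (c p) = (0 : Matrix ι ι ℂ) := by
      refine Finset.sum_eq_zero fun p hp => ?_
      apply single_mul_single_of_ne
      intro h
      have := hs p (Finset.mem_insert_of_mem hp)
      rw [← h] at this
      omega
    rw [hz]
    abel

lemma aux_blockcol (b : ι → ℕ) (k : ℕ) (g : Matrix ι ι ℂ) (hg : BlockTriangular g b)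
    (hd : (g.toSquareBlock b k).det = 1) :
    (Matrix.of fun i j => if b j = k then g i j else (1 : Matrix ι ι ℂ) i j) ∈ auxH b := by
  have h1 := auxH_coe.2 (auxPhi_mem b k ⟨_, hd⟩)
  have h2 := aux_unip b k (fun p => g p.1 p.2)
    (Finset.univ.filter fun p => b p.1 < k ∧ b p.2 = k) (by simp)
  have h3 := mul_mem h1 h2
  convert h3 using 1
  set B : Matrix ι ι ℂ := Matrix.of fun i j => if b i < k ∧ b j = k then g i j else 0 with hB
  have hsum : (∑ p ∈ Finset.univ.filter (fun p : ι × ι => b p.1 < k ∧ b p.2 = k),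
      single p.1 p.2 (g p.1 p.2) : Matrix ι ι ℂ) = B := by
    conv_rhs => rw [matrix_eq_sum_single B]
    rw [Finset.sum_filter, ← Finset.univ_product_univ, Finset.sum_product]
    refine Finset.sum_congr rfl fun i _ => Finset.sum_congr rfl fun j _ => ?_
    by_cases h : b i < k ∧ b j = k
    · simp [hB, h]
    · simp only [hB, h, of_apply, if_false, single_zero]
  rw [hsum]
  show _ = auxPhiM b k _ * (1 + B)
  have hPB : auxPhiM b k (g.toSquareBlock b k) * B = B := by
    conv_rhs => rw [← one_mul B]
    ext i j
    rw [mul_apply, mul_apply]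
    refine Finset.sum_congr rfl fun l _ => ?_
    rw [auxPhiM_apply]
    by_cases h : b l < k ∧ b j = k
    · rw [if_neg (by omega)]
    · simp [hB, h]
  rw [mul_add, mul_one, hPB]
  ext i j
  rw [Matrix.add_apply, auxPhiM_apply]
  simp only [hB, of_apply]
  by_cases hj : b j = k
  · rcases lt_trichotomy (b i) k with h | h | h
    · have : i ≠ j := by rintro rfl; omega
      simp [hj, h, h.ne, this]
    · simp [hj, h]
    · have : i ≠ j := by rintro rfl; omega
      simp [hj, h.ne', h.not_gt, this, hg (show b j < b i by omega)]
  · simp [hj]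

lemma aux_cols (b : ι → ℕ) (g : Matrix ι ι ℂ) (hg : BlockTriangular g b)
    (hd : ∀ k, (g.toSquareBlock b k).det = 1) (N : ℕ) (hN : ∀ i, b i < N) (d : ℕ) : ∀ t, t + d = N →
    (Matrix.of fun i j => if t ≤ b j then g i j else (1 : Matrix ι ι ℂ) i j) ∈ auxH b := by
  induction d with
  | zero =>
    intro t ht
    convert one_mem (auxH b)
    ext i j
    have := hN j
    simp only [of_apply]
    rw [if_neg (by omega)]
  | succ d ih =>
    intro t ht
    have := mul_mem (ih (t+1) (by omega)) (aux_blockcol b t g hg (hd t))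
    convert this using 1
    ext i j
    rw [mul_apply]
    simp only [of_apply]
    by_cases hj : b j = t
    · simp only [hj, le_refl, if_true]
      have : g i j = ∑ l, (1 : Matrix ι ι ℂ) i l * g l j := by
        rw [← mul_apply, one_mul]
      rw [this]
      refine Finset.sum_congr rfl fun l _ => ?_
      by_cases hl : t + 1 ≤ b l
      · rw [hg (show b j < b l by omega)]; simp
      · rw [if_neg hl]
    · simp only [hj, if_false, one_apply, mul_ite, mul_one, mul_zero]
      simp only [Finset.sum_ite_eq', Finset.mem_univ, if_true]
      have : t ≤ b j ↔ t + 1 ≤ b j := by omega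
      simp only [this]

lemma aux_block_mul (b : ι → ℕ) (k : ℕ) {x y : Matrix ι ι ℂ} (hx : BlockTriangular x b)
    (hy : BlockTriangular y b) :
    ((x * y).toSquareBlock b k).det = (x.toSquareBlock b k).det * (y.toSquareBlock b k).det := by
  rw [← det_mul]
  congr 1
  ext ⟨i, hi⟩ ⟨j, hj⟩
  show (x * y) i j = ∑ l : {l // b l = k}, x i l * y l j
  rw [mul_apply]
  have h1 : ∑ l : {l // b l = k}, x i l * y l j = ∑ l ∈ Finset.univ.filter (fun l => b l = k),
      x i l * y l j := 
    (Finset.sum_subtype (p := fun l => b l = k) (Finset.univ.filter (fun l => b l = k))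
      (fun l => by simp) (fun l => x i l * y l j)).symm
  rw [h1, Finset.sum_filter]
  refine Finset.sum_congr rfl fun l _ => ?_
  rcases lt_trichotomy (b l) k with h | h | h
  · rw [hx (show b l < b i by omega)]; simp
  · simp [h]
  · rw [hy (show b j < b l by omega)]; simp

theorem aux_main (b : ι → ℕ) (g : SpecialLinearGroup ι ℂ) :
    g ∈ ⁅auxP b, auxP b⁆ ↔ BlockTriangular (g : Matrix ι ι ℂ) b ∧
      ∀ k, ((g : Matrix ι ι ℂ).toSquareBlock b k).det = 1 := by
  constructor
  · intro hg
    have h1 : g ∈ auxP b := Subgroup.commutator_le_self _ hg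
    refine ⟨h1, fun k => ?_⟩
    let f : auxP b →* ℂ :=
      { toFun := fun x => ((x : SpecialLinearGroup ι ℂ) : Matrix ι ι ℂ).toSquareBlock b k |>.det
        map_one' := by
          show ((1 : Matrix ι ι ℂ).toSquareBlock b k).det = 1
          convert det_one (R := ℂ) (n := {i // b i = k})
          ext i j
          simp [toSquareBlock_def, one_apply, Subtype.ext_iff]
        map_mul' := fun x y => aux_block_mul b k x.2 y.2 }
    have h2 : ⁅auxP b, auxP b⁆ ≤ (f.toHomUnits.ker).map (auxP b).subtype := by
      rw [Subgroup.commutator_le]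
      intro x hx y hy
      refine ⟨⁅(⟨x, hx⟩ : auxP b), (⟨y, hy⟩ : auxP b)⁆, ?_, rfl⟩
      show _ ∈ MonoidHom.ker _
      rw [MonoidHom.mem_ker, map_commutatorElement, commutatorElement_eq_one_iff_mul_comm, mul_comm]
    obtain ⟨x, hx, rfl⟩ := h2 hg
    have h3 : f.toHomUnits x = 1 := hx
    have := congrArg Units.val h3
    exact this
  · rintro ⟨h1, h2⟩
    obtain ⟨N, hN⟩ : ∃ N, ∀ i, b i < N :=
      ⟨Finset.univ.sup b + 1, fun i => Nat.lt_succ_of_le (Finset.le_sup (Finset.mem_univ i))⟩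
    have := aux_cols b g h1 h2 N hN N 0 (by omega)
    apply auxH_coe.1
    convert this using 1
    ext i j
    simp

end ParabolicHelpers

section FlagHelpers

open Matrix

/-- The diagonal block of size `b - a` ending `a` rows above the bottom. -/
def diagBlock {n : ℕ} (a b : ℕ) (hb : b ≤ n) (M : Matrix (Fin n) (Fin n) ℂ) :
    Matrix (Fin (b - a)) (Fin (b - a)) ℂ :=
  Matrix.of fun p q => M ⟨n - b + (p : ℕ), by omega⟩ ⟨n - b + (q : ℕ), by omega⟩

def flagIdx (m : ℕ) (dims : ℕ → ℕ) (p : Fin (dims (m+1))) : ℕ :=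
  ((Finset.Icc 1 m).filter (fun s => dims (m+1) - dims s ≤ (p : ℕ))).card

lemma flagIdx_lt (m : ℕ) (dims : ℕ → ℕ) (p q : Fin (dims (m+1))) :
    flagIdx m dims q < flagIdx m dims p ↔
      ∃ s, 1 ≤ s ∧ s ≤ m ∧ (q : ℕ) < dims (m+1) - dims s ∧ dims (m+1) - dims s ≤ (p : ℕ) := by
  constructor
  · intro h
    by_contra hc
    push Not at hc
    refine absurd h (not_lt.mpr (Finset.card_le_card ?_))
    intro s hs
    simp only [Finset.mem_filter, Finset.mem_Icc] at hs ⊢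
    refine ⟨hs.1, ?_⟩
    by_contra hq
    have := hc s hs.1.1 hs.1.2 (by omega)
    omega
  · rintro ⟨s, h1, h2, h3, h4⟩
    apply Finset.card_lt_card
    rw [Finset.ssubset_iff_of_subset]
    · refine ⟨s, ?_, ?_⟩
      · simp only [Finset.mem_filter, Finset.mem_Icc]; omega
      · simp only [Finset.mem_filter, Finset.mem_Icc]; omega
    · intro t ht
      simp only [Finset.mem_filter, Finset.mem_Icc] at ht ⊢
      omega

lemma flag_iff (m : ℕ) (dims : ℕ → ℕ) (M : Matrix (Fin (dims (m+1))) (Fin (dims (m+1))) ℂ) :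
    BlockUpperTriangularFlag m dims M ↔ Matrix.BlockTriangular M (flagIdx m dims) := by
  constructor
  · intro h p q hpq
    obtain ⟨s, h1, h2, h3, h4⟩ := (flagIdx_lt m dims p q).1 hpq
    exact h s h1 h2 p q h3 h4
  · intro h s h1 h2 p q h3 h4
    exact h ((flagIdx_lt m dims p q).2 ⟨s, h1, h2, h3, h4⟩)

lemma parabolicP_eq (m : ℕ) (dims : ℕ → ℕ) :
    parabolicP m dims = auxP (flagIdx m dims) := by
  have : {h : Matrix.SpecialLinearGroup (Fin (dims (m+1))) ℂ | BlockUpperTriangularFlag m dims ↑h}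
      = (auxP (flagIdx m dims) : Set _) := by
    ext h
    exact flag_iff m dims _
  unfold parabolicP
  rw [this, Subgroup.closure_eq]

lemma flagIdx_eq (m : ℕ) (dims : ℕ → ℕ) (h00 : dims 0 = 0)
    (hmon : ∀ i j, i ≤ j → j ≤ m + 1 → dims i ≤ dims j) (s : ℕ) (hs : s ≤ m)
    (p : Fin (dims (m+1))) :
    flagIdx m dims p = m - s ↔
      dims (m+1) - dims (s+1) ≤ (p : ℕ) ∧ (p : ℕ) < dims (m+1) - dims s := by
  have key : ∀ s, s ≤ m → dims (m+1) - dims (s+1) ≤ (p : ℕ) → (p : ℕ) < dims (m+1) - dims s →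
      flagIdx m dims p = m - s := by
    intro s hs h1 h2
    have : (Finset.Icc 1 m).filter (fun s => dims (m+1) - dims s ≤ (p : ℕ))
        = Finset.Icc (s+1) m := by
      ext t
      simp only [Finset.mem_filter, Finset.mem_Icc]
      constructor
      · rintro ⟨⟨ha, hb⟩, hc⟩
        refine ⟨?_, hb⟩
        by_contra hlt
        have := hmon t s (by omega) (by omega)
        omega
      · rintro ⟨ha, hb⟩
        have := hmon (s+1) t (by omega) (by omega)
        omega
    unfold flagIdx
    rw [this, Nat.card_Icc]
    omega
  constructor
  · intro h
    have hex : ∃ t, dims (m+1) - dims t ≤ (p : ℕ) := ⟨m+1, by omega⟩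
    classical
    have hf := Nat.find_spec hex
    have hle : Nat.find hex ≤ m + 1 := Nat.find_min' hex (by omega)
    have hmin : ∀ t, t < Nat.find hex → ¬ (dims (m+1) - dims t ≤ (p : ℕ)) :=
      fun t ht => Nat.find_min hex ht
    generalize Nat.find hex = t at hf hle hmin
    have hp := p.isLt
    obtain _ | t := t
    · omega
    · have h2 := hmin t (by omega)
      have h3 := key t (by omega) hf (by omega)
      have : t = s := by omega
      subst this
      exact ⟨hf, by omega⟩
  · rintro ⟨h1, h2⟩
    exact key s hs h1 h2

lemma flagIdx_le (m : ℕ) (dims : ℕ → ℕ) (p : Fin (dims (m+1))) : flagIdx m dims p ≤ m := by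
  unfold flagIdx
  refine (Finset.card_filter_le _ _).trans ?_
  simp

lemma offset_lt {n a b p : ℕ} (hb : b ≤ n) (hp : p < b - a) : n - b + p < n := by
  omega

def flagEquiv (m : ℕ) (dims : ℕ → ℕ) (h00 : dims 0 = 0)
    (hmon : ∀ i j, i ≤ j → j ≤ m + 1 → dims i ≤ dims j) (s : ℕ) (hs : s ≤ m) :
    Fin (dims (s+1) - dims s) ≃ {p : Fin (dims (m+1)) // flagIdx m dims p = m - s} where
  toFun p := ⟨⟨dims (m+1) - dims (s+1) + (p : ℕ),
      offset_lt (hmon (s+1) (m+1) (Nat.succ_le_succ hs) le_rfl) p.isLt⟩, by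
      rw [flagIdx_eq m dims h00 hmon s hs]
      have := p.isLt; have := hmon (s+1) (m+1) (Nat.succ_le_succ hs) le_rfl
      simp only
      omega⟩
  invFun p := ⟨(p.1 : ℕ) - (dims (m+1) - dims (s+1)), by
      have h := (flagIdx_eq m dims h00 hmon s hs p.1).1 p.2
      have := hmon (s+1) (m+1) (by omega) (by omega)
      have := hmon s (s+1) (by omega) (by omega)
      omega⟩
  left_inv p := by ext; simp
  right_inv p := by
    have h := (flagIdx_eq m dims h00 hmon s hs p.1).1 p.2
    apply Subtype.ext
    apply Fin.ext
    simp only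
    omega

lemma flag_bc (m : ℕ) (dims : ℕ → ℕ) (h00 : dims 0 = 0)
    (hmon : ∀ i j, i ≤ j → j ≤ m + 1 → dims i ≤ dims j)
    (hub : ∀ i, i ≤ m + 1 → dims i ≤ dims (m+1))
    (g : Matrix.SpecialLinearGroup (Fin (dims (m+1))) ℂ) :
    (g ∈ ⁅parabolicP m dims, parabolicP m dims⁆ ↔
      (BlockUpperTriangularFlag m dims ↑g ∧
        ∀ s, ∀ hsm : s ≤ m,
          Matrix.det (diagBlock (dims s) (dims (s+1)) (hub (s+1) (by omega))
            g.1) = 1)) := by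
  rw [parabolicP_eq, aux_main, flag_iff]
  refine and_congr_right fun _ => ?_
  have hblock : ∀ s, ∀ hsm : s ≤ m,
      Matrix.det (diagBlock (dims s) (dims (s+1)) (hub (s+1) (by omega))
            g.1)
      = ((g : Matrix (Fin (dims (m+1))) (Fin (dims (m+1))) ℂ).toSquareBlock
          (flagIdx m dims) (m - s)).det := by
    intro s hsm
    rw [← Matrix.det_submatrix_equiv_self (flagEquiv m dims h00 hmon s hsm)]
    rfl
  constructor
  · intro h s hsm
    rw [hblock s hsm]
    exact h _
  · intro h k
    by_cases hk : k ≤ m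
    · have := h (m - k) (by omega)
      rw [hblock (m - k) (by omega)] at this
      rwa [show m - (m - k) = k by omega] at this
    · have : IsEmpty {p : Fin (dims (m+1)) // flagIdx m dims p = k} :=
        ⟨fun p => by have := flagIdx_le m dims p.1; have := p.2; omega⟩
      exact Matrix.det_isEmpty

end FlagHelpers

section CornerHelpers

open Matrix

lemma entry_congr {a : ℕ} (M : Matrix (Fin a) (Fin a) ℂ) {p p' q q' : Fin a}
    (hp : (p : ℕ) = p') (hq : (q : ℕ) = q') : M p q = M p' q' := by
  rw [Fin.ext hp, Fin.ext hq]

/-- The lower right corner of size `a`. -/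
def corner {n : ℕ} (a : ℕ) (ha : a ≤ n) (M : Matrix (Fin n) (Fin n) ℂ) :
    Matrix (Fin a) (Fin a) ℂ :=
  Matrix.of fun p q => M ⟨n - a + (p : ℕ), by omega⟩ ⟨n - a + (q : ℕ), by omega⟩

lemma corner_det {n : ℕ} (a b : ℕ) (hab : a ≤ b) (hb : b ≤ n) (M : Matrix (Fin n) (Fin n) ℂ)
    (hM : ∀ p q : Fin n, n - a ≤ (p : ℕ) → (q : ℕ) < n - a → M p q = 0) :
    (corner b hb M).det = (Matrix.of fun p q : Fin (b - a) =>
      M ⟨n - b + (p : ℕ), by omega⟩ ⟨n - b + (q : ℕ), by omega⟩).det *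
      (corner a (hab.trans hb) M).det := by
  let e : Fin (b - a) ⊕ Fin a ≃ Fin b :=
    finSumFinEquiv.trans (finCongr (by omega))
  rw [← Matrix.det_submatrix_equiv_self e]
  have : (corner b hb M).submatrix e e = Matrix.fromBlocks
      (Matrix.of fun p q : Fin (b - a) =>
        M ⟨n - b + (p : ℕ), by omega⟩ ⟨n - b + (q : ℕ), by omega⟩)
      (Matrix.of fun (p : Fin (b - a)) (q : Fin a) =>
        M ⟨n - b + (p : ℕ), by omega⟩ ⟨n - a + (q : ℕ), by omega⟩)
      0 (corner a (hab.trans hb) M) := by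
    ext p q
    rcases p with p | p <;> rcases q with q | q
    · rfl
    · simp only [corner, e, Matrix.submatrix_apply, Matrix.fromBlocks_apply₁₂, Matrix.of_apply]
      congr 1
      apply Fin.ext
      simp
      omega
    · simp only [corner, e, Matrix.submatrix_apply, Matrix.fromBlocks_apply₂₁, Matrix.of_apply,
        Matrix.zero_apply]
      apply hM
      · simp
        omega
      · simp
        omega
    · simp only [corner, e, Matrix.submatrix_apply, Matrix.fromBlocks_apply₂₂, Matrix.of_apply]
      congr 1 <;> apply Fin.ext <;> simp <;> omega
  rw [this, Matrix.det_fromBlocks_zero₂₁]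

lemma mul_stdBeta {a b : ℕ} (X : Matrix (Fin a) (Fin a) ℂ) (p : Fin a) (q : Fin b) (hab : a ≤ b) :
    (X * stdBeta a b) p q =
      if h : b - a ≤ (q : ℕ) then X p ⟨(q : ℕ) - (b - a), by omega⟩ else 0 := by
  rw [Matrix.mul_apply]
  split_ifs with h
  · rw [Finset.sum_eq_single (⟨(q : ℕ) - (b - a), by omega⟩ : Fin a)]
    · simp only [stdBeta, Matrix.of_apply]
      rw [if_pos (by omega), mul_one]
    · intro j _ hj
      simp only [stdBeta, Matrix.of_apply]
      rw [if_neg, mul_zero]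
      intro hq
      apply hj
      apply Fin.ext
      simp only
      omega
    · simp
  · apply Finset.sum_eq_zero
    intro j _
    simp only [stdBeta, Matrix.of_apply]
    rw [if_neg (by omega), mul_zero]

lemma stdBeta_mul {a b : ℕ} (X : Matrix (Fin b) (Fin b) ℂ) (p : Fin a) (q : Fin b) (hab : a ≤ b) :
    (stdBeta a b * X) p q = X ⟨(p : ℕ) + (b - a), by omega⟩ q := by
  rw [Matrix.mul_apply, Finset.sum_eq_single (⟨(p : ℕ) + (b - a), by omega⟩ : Fin b)]
  · simp [stdBeta]
  · intro j _ hj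
    simp only [stdBeta, Matrix.of_apply]
    rw [if_neg, zero_mul]
    intro hq
    exact hj (Fin.ext hq)
  · simp

lemma corner_det_one (m : ℕ) (dims : ℕ → ℕ) (h00 : dims 0 = 0)
    (hmon : ∀ i j, i ≤ j → j ≤ m + 1 → dims i ≤ dims j)
    (hub : ∀ i, i ≤ m + 1 → dims i ≤ dims (m+1))
    (M : Matrix (Fin (dims (m+1))) (Fin (dims (m+1))) ℂ)
    (hM : BlockUpperTriangularFlag m dims M)
    (hd : ∀ s, ∀ hsm : s ≤ m,
          Matrix.det (diagBlock (dims s) (dims (s+1)) (hub (s+1) (by omega))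
            M) = 1)
    (i : ℕ) (hi : i ≤ m + 1) : (corner (dims i) (hub i hi) M).det = 1 := by
  induction i with
  | zero =>
    have : IsEmpty (Fin (dims 0)) := by rw [h00]; infer_instance
    exact Matrix.det_isEmpty
  | succ s ih =>
    rw [corner_det (dims s) (dims (s+1)) (hmon _ _ (by omega) (by omega)) (hub _ hi) M]
    · rw [ih (by omega), mul_one]
      exact hd s (by omega)
    · intro p q hp hq
      rcases Nat.eq_zero_or_pos s with rfl | hs
      · have := p.isLt
        omega
      · exact hM s hs (by omega) p q hq hp

lemma flag_ac (m : ℕ) (dims : ℕ → ℕ) (h00 : dims 0 = 0)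
    (hmon : ∀ i j, i ≤ j → j ≤ m + 1 → dims i ≤ dims j)
    (hub : ∀ i, i ≤ m + 1 → dims i ≤ dims (m+1))
    (g : Matrix.SpecialLinearGroup (Fin (dims (m+1))) ℂ) :
    (∃ G : ∀ i : ℕ, Matrix.SpecialLinearGroup (Fin (dims i)) ℂ,
        G (m+1) = g ∧
        ∀ i, 1 ≤ i → i ≤ m →
          (↑(G i) : Matrix (Fin (dims i)) (Fin (dims i)) ℂ) * stdBeta (dims i) (dims (i+1)) =
            stdBeta (dims i) (dims (i+1)) *
              (↑(G (i+1)) : Matrix (Fin (dims (i+1))) (Fin (dims (i+1))) ℂ)) ↔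
      (BlockUpperTriangularFlag m dims ↑g ∧
        ∀ s, ∀ hsm : s ≤ m,
          Matrix.det (diagBlock (dims s) (dims (s+1)) (hub (s+1) (by omega))
            g.1) = 1) := by
  constructor
  · rintro ⟨G, hG, hcomm⟩
    have key : ∀ j i, i + j = m + 1 → ∀ hi1 : 1 ≤ i, ∀ him : i ≤ m + 1,
        ∀ (p : Fin (dims i)) (q : Fin (dims (m+1))),
        (g : Matrix (Fin (dims (m+1))) (Fin (dims (m+1))) ℂ)
          ⟨dims (m+1) - dims i + (p : ℕ), by have := hub i him; omega⟩ q =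
        if h : dims (m+1) - dims i ≤ (q : ℕ) then
          (G i : Matrix (Fin (dims i)) (Fin (dims i)) ℂ) p
            ⟨(q : ℕ) - (dims (m+1) - dims i), by have := hub i him; omega⟩ else 0 := by
      intro j
      induction j with
      | zero =>
        intro i hij hi1 him p q
        obtain rfl : i = m + 1 := by omega
        rw [dif_pos (by omega), hG]
        refine entry_congr g.1 ?_ ?_ <;> simp
      | succ j ih =>
        intro i hij hi1 him p q
        have hle := hmon i (i+1) (by omega) (by omega)
        have hle2 := hub (i+1) (by omega)
        have h1 := ih (i+1) (by omega) (by omega) (by omega)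
          ⟨(p : ℕ) + (dims (i+1) - dims i), by omega⟩ q
        have hidx : (⟨dims (m+1) - dims i + (p : ℕ), by omega⟩ : Fin (dims (m+1))) =
            ⟨dims (m+1) - dims (i+1) + ((p : ℕ) + (dims (i+1) - dims i)), by omega⟩ := by
          apply Fin.ext
          simp only
          omega
        rw [hidx]
        refine h1.trans ?_
        have hc : ∀ q', (G (i+1) : Matrix (Fin (dims (i+1))) (Fin (dims (i+1))) ℂ)
            ⟨(p : ℕ) + (dims (i+1) - dims i), by omega⟩ q' = _ := fun q' =>
          (stdBeta_mul _ p q' hle).symm.trans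
            ((congrFun (congrFun (hcomm i hi1 (by omega)) p) q').symm.trans
              (mul_stdBeta _ p q' hle))
        by_cases hq1 : dims (m+1) - dims (i+1) ≤ (q : ℕ)
        · rw [dif_pos hq1, hc]
          by_cases hq2 : dims (m+1) - dims i ≤ (q : ℕ)
          · rw [dif_pos hq2, dif_pos (by simp only; omega)]
            refine entry_congr (G i).1 rfl ?_
            simp only
            omega
          · rw [dif_neg hq2, dif_neg (by simp only; omega)]
        · rw [dif_neg hq1, dif_neg (by omega)]
    have hzero : ∀ i, 1 ≤ i → i ≤ m + 1 → ∀ p q : Fin (dims (m+1)),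
        dims (m+1) - dims i ≤ (p : ℕ) → (q : ℕ) < dims (m+1) - dims i →
        (g : Matrix (Fin (dims (m+1))) (Fin (dims (m+1))) ℂ) p q = 0 := by
      intro i hi1 him p q hp hq
      have hu := hub i him
      have h := key (m + 1 - i) i (by omega) hi1 him
        ⟨(p : ℕ) - (dims (m+1) - dims i), by omega⟩ q
      rw [dif_neg (by omega)] at h
      rw [← h]
      refine entry_congr g.1 ?_ rfl
      simp only
      omega
    have hcor : ∀ i, ∀ him : i ≤ m + 1,
        (corner (dims i) (hub i him)
          (g : Matrix (Fin (dims (m+1))) (Fin (dims (m+1))) ℂ)).det = 1 := by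
      intro i him
      rcases Nat.eq_zero_or_pos i with rfl | hi
      · have : IsEmpty (Fin (dims 0)) := by rw [h00]; infer_instance
        exact Matrix.det_isEmpty
      · have : corner (dims i) (hub i him)
            (g : Matrix (Fin (dims (m+1))) (Fin (dims (m+1))) ℂ) = (G i).1 := by
          ext p q
          have hu := hub i him
          refine (key (m + 1 - i) i (by omega) hi him p
            ⟨dims (m+1) - dims i + (q : ℕ), by omega⟩).trans ?_
          rw [dif_pos (by simp)]
          refine entry_congr (G i).1 rfl ?_
          simp
        rw [this]
        exact (G i).2
    refine ⟨fun s h1 h2 p q hq hp => hzero s h1 (by omega) p q hp hq, ?_⟩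
    intro s hsm
    have h := corner_det (dims s) (dims (s+1)) (hmon _ _ (by omega) (by omega))
      (hub (s+1) (by omega)) (g : Matrix (Fin (dims (m+1))) (Fin (dims (m+1))) ℂ) (by
        intro p q hp hq
        rcases Nat.eq_zero_or_pos s with rfl | hs
        · have := p.isLt
          omega
        · exact hzero s hs (by omega) p q hp hq)
    rw [hcor (s+1) (by omega), hcor s (by omega), mul_one] at h
    exact h.symm
  · rintro ⟨hM, hd⟩
    have hex : ∀ i, ∃ X : Matrix.SpecialLinearGroup (Fin (dims i)) ℂ, ∀ hi : i ≤ m + 1,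
        ∀ p q : Fin (dims i), X.1 p q = corner (dims i) (hub i hi) g.1 p q := by
      intro i
      by_cases hi : i ≤ m + 1
      · exact ⟨⟨corner (dims i) (hub i hi) g.1,
          corner_det_one m dims h00 hmon hub g.1 hM hd i hi⟩, fun _ _ _ => rfl⟩
      · exact ⟨1, fun h => absurd h hi⟩
    choose G hG using hex
    refine ⟨G, ?_, ?_⟩
    · apply Subtype.ext
      ext p q
      refine (hG (m+1) le_rfl p q).trans ?_
      refine entry_congr g.1 ?_ ?_ <;> simp
    · intro i hi1 him
      have hle := hmon i (i+1) (by omega) (by omega)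
      have hle2 := hub (i+1) (by omega)
      ext p q
      rw [mul_stdBeta _ p q hle, stdBeta_mul _ p q hle]
      refine Eq.trans ?_ (hG (i+1) (by omega) _ _).symm
      split_ifs with h
      · refine (hG i (by omega) _ _).trans ?_
        refine entry_congr g.1 ?_ ?_ <;> simp only <;> omega
      · symm
        apply hM i hi1 him
        · simp only
          omega
        · simp only
          omega

end CornerHelpers

/-- (Here the paper's `r` is `m + 1` and `n = dims (m+1)`,
with `0 = dims 0 < dims 1 < … < dims (m+1) = n`; the paper's `β_i`, for
`i = 1, …, r−1 = m`, is `stdBeta (dims i) (dims (i+1))`.)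

For `g ∈ SL(n, ℂ)` the following are equivalent:
(a) there exist `g_i ∈ SL(dims i, ℂ)`, `i = 1, …, m`, with `g_i β_i = β_i g_{i+1}`
for all `i = 1, …, m` (where `g_{m+1} = g`);
(b) `g` lies in the commutator subgroup `[P,P]` of the parabolic `P`;
equivalently (c) `g` is block upper triangular with respect to the flag and
each of its diagonal blocks has determinant `1`. -/
theorem statement3 (m : ℕ) (dims : ℕ → ℕ) (h00 : dims 0 = 0) (h1 : 0 < dims 1)
    (hmono : ∀ i, 1 ≤ i → i ≤ m → dims i < dims (i+1))
    (hub : ∀ i, i ≤ m + 1 → dims i ≤ dims (m+1))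
    (g : Matrix.SpecialLinearGroup (Fin (dims (m+1))) ℂ) :
    ((∃ G : ∀ i : ℕ, Matrix.SpecialLinearGroup (Fin (dims i)) ℂ,
        G (m+1) = g ∧
        ∀ i, 1 ≤ i → i ≤ m →
          (↑(G i) : Matrix (Fin (dims i)) (Fin (dims i)) ℂ) * stdBeta (dims i) (dims (i+1)) =
            stdBeta (dims i) (dims (i+1)) *
              (↑(G (i+1)) : Matrix (Fin (dims (i+1))) (Fin (dims (i+1))) ℂ)) ↔
      g ∈ ⁅parabolicP m dims, parabolicP m dims⁆) ∧
    (g ∈ ⁅parabolicP m dims, parabolicP m dims⁆ ↔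
      (BlockUpperTriangularFlag m dims ↑g ∧
        ∀ s, ∀ hsm : s ≤ m,
          Matrix.det (Matrix.of fun p q : Fin (dims (s+1) - dims s) =>
            (↑g : Matrix (Fin (dims (m+1))) (Fin (dims (m+1))) ℂ)
              ⟨dims (m+1) - dims (s+1) + (p : ℕ), by
                have hp := p.isLt; have hs := hub (s+1) (by omega); omega⟩
              ⟨dims (m+1) - dims (s+1) + (q : ℕ), by
                have hq := q.isLt; have hs := hub (s+1) (by omega); omega⟩) = 1)) := by
  have hmon : ∀ i j, i ≤ j → j ≤ m + 1 → dims i ≤ dims j := by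
    intro i j hij
    induction j, hij using Nat.le_induction with
    | base => intro _; exact le_rfl
    | succ j hij ih =>
      intro hj
      refine (ih (by omega)).trans ?_
      rcases Nat.eq_zero_or_pos j with rfl | h
      · rw [h00]; exact Nat.zero_le _
      · exact (hmono j h (by omega)).le
  have hbc := flag_bc m dims h00 hmon hub g
  exact ⟨(flag_ac m dims h00 hmon hub g).trans hbc.symm, hbc⟩
end

section
/- Fix integers r ≥ 2 and 0 = n_0 ≤ n_1 ≤ … ≤ n_r = n, and a quiver (α, β). (1) If each α_i is injective and each β_i is surjective (for i = 1,…,r−1), then the orbit of (α, β) under ∏_{i=1}^{r−1} GL(n_i,ℂ) is a closed subset of the product matrix space, and the stabiliser is trivial. (2) If all α_i are injective, or all β_i are surjective, then the orbit of (α, β) under ∏_{i=1}^{r−1} SL(n_i,ℂ) is closed with trivial stabiliser. -/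
/-- The action of `(g_i) ∈ ∏ GL(dims i, ℂ)` on the maps `α` of a quiver:
`α_i ↦ g_{i+1} α_i g_i⁻¹`. -/
noncomputable def glActA (dims : ℕ → ℕ) (g : ∀ i : ℕ, Matrix.GeneralLinearGroup (Fin (dims i)) ℂ)
    (α : ∀ i : ℕ, Matrix (Fin (dims (i+1))) (Fin (dims i)) ℂ) :
    ∀ i : ℕ, Matrix (Fin (dims (i+1))) (Fin (dims i)) ℂ :=
  fun i => (↑(g (i+1)) : Matrix (Fin (dims (i+1))) (Fin (dims (i+1))) ℂ) * α i *
    (↑((g i)⁻¹) : Matrix (Fin (dims i)) (Fin (dims i)) ℂ)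

/-- The action of `(g_i) ∈ ∏ GL(dims i, ℂ)` on the maps `β` of a quiver:
`β_i ↦ g_i β_i g_{i+1}⁻¹`. -/
noncomputable def glActB (dims : ℕ → ℕ) (g : ∀ i : ℕ, Matrix.GeneralLinearGroup (Fin (dims i)) ℂ)
    (β : ∀ i : ℕ, Matrix (Fin (dims i)) (Fin (dims (i+1))) ℂ) :
    ∀ i : ℕ, Matrix (Fin (dims i)) (Fin (dims (i+1))) ℂ :=
  fun i => (↑(g i) : Matrix (Fin (dims i)) (Fin (dims i)) ℂ) * β i *
    (↑((g (i+1))⁻¹) : Matrix (Fin (dims (i+1))) (Fin (dims (i+1))) ℂ)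

/-- The action of `(g_i) ∈ ∏ SL(dims i, ℂ)` on the maps `α` of a quiver. -/
noncomputable def slActA (dims : ℕ → ℕ) (g : ∀ i : ℕ, Matrix.SpecialLinearGroup (Fin (dims i)) ℂ)
    (α : ∀ i : ℕ, Matrix (Fin (dims (i+1))) (Fin (dims i)) ℂ) :
    ∀ i : ℕ, Matrix (Fin (dims (i+1))) (Fin (dims i)) ℂ :=
  fun i => (↑(g (i+1)) : Matrix (Fin (dims (i+1))) (Fin (dims (i+1))) ℂ) * α i *
    (↑((g i)⁻¹) : Matrix (Fin (dims i)) (Fin (dims i)) ℂ)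

/-- The action of `(g_i) ∈ ∏ SL(dims i, ℂ)` on the maps `β` of a quiver. -/
noncomputable def slActB (dims : ℕ → ℕ) (g : ∀ i : ℕ, Matrix.SpecialLinearGroup (Fin (dims i)) ℂ)
    (β : ∀ i : ℕ, Matrix (Fin (dims i)) (Fin (dims (i+1))) ℂ) :
    ∀ i : ℕ, Matrix (Fin (dims i)) (Fin (dims (i+1))) ℂ :=
  fun i => (↑(g i) : Matrix (Fin (dims i)) (Fin (dims i)) ℂ) * β i *
    (↑((g (i+1))⁻¹) : Matrix (Fin (dims (i+1))) (Fin (dims (i+1))) ℂ)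

namespace QuiverAux

lemma leftInv {a b : ℕ} (M : Matrix (Fin a) (Fin b) ℂ) (h : Function.Injective M.mulVecLin) :
    ∃ L : Matrix (Fin b) (Fin a) ℂ, L * M = 1 := by
  obtain ⟨f, hf⟩ := LinearMap.exists_leftInverse_of_injective M.mulVecLin (LinearMap.ker_eq_bot.2 h)
  refine ⟨LinearMap.toMatrix' f, ?_⟩
  have := congrArg LinearMap.toMatrix' hf
  rw [LinearMap.toMatrix'_comp, ← Matrix.toLin'_apply', LinearMap.toMatrix'_toLin', LinearMap.toMatrix'_id] at this
  exact this

lemma rightInv {a b : ℕ} (M : Matrix (Fin a) (Fin b) ℂ) (h : Function.Surjective M.mulVecLin) :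
    ∃ R : Matrix (Fin b) (Fin a) ℂ, M * R = 1 := by
  obtain ⟨f, hf⟩ := LinearMap.exists_rightInverse_of_surjective M.mulVecLin (LinearMap.range_eq_top.2 h)
  refine ⟨LinearMap.toMatrix' f, ?_⟩
  have := congrArg LinearMap.toMatrix' hf
  rw [LinearMap.toMatrix'_comp, ← Matrix.toLin'_apply', LinearMap.toMatrix'_toLin', LinearMap.toMatrix'_id] at this
  exact this

/-- The representation space. -/
abbrev Q (dims : ℕ → ℕ) := (∀ i : ℕ, Matrix (Fin (dims (i+1))) (Fin (dims i)) ℂ) ×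
            (∀ i : ℕ, Matrix (Fin (dims i)) (Fin (dims (i+1))) ℂ)

/-- `q` agrees with `g · (α, β)` in degrees `≤ m`. -/
def Rel (m : ℕ) (dims : ℕ → ℕ) (α : ∀ i : ℕ, Matrix (Fin (dims (i+1))) (Fin (dims i)) ℂ)
    (β : ∀ i : ℕ, Matrix (Fin (dims i)) (Fin (dims (i+1))) ℂ) (q : Q dims)
    (g : ∀ i : ℕ, Matrix.GeneralLinearGroup (Fin (dims i)) ℂ) : Prop :=
  g (m+1) = 1 ∧ ∀ i ≤ m, q.1 i = glActA dims g α i ∧ q.2 i = glActB dims g β i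

variable {m : ℕ} {dims : ℕ → ℕ} {α : ∀ i : ℕ, Matrix (Fin (dims (i+1))) (Fin (dims i)) ℂ}
    {β : ∀ i : ℕ, Matrix (Fin (dims i)) (Fin (dims (i+1))) ℂ}

lemma recA (hα : ∀ i ≤ m, Function.Injective (α i).mulVecLin) :
    ∃ H : ∀ i, Q dims → Matrix (Fin (dims i)) (Fin (dims i)) ℂ, (∀ i, Continuous (H i)) ∧
      ∀ q g, Rel m dims α β q g → ∀ i ≤ m + 1, H i q = ((g i)⁻¹).1 := by
  have key : ∀ i, ∃ H : Q dims → Matrix (Fin (dims i)) (Fin (dims i)) ℂ, Continuous H ∧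
      (i ≤ m + 1 → ∀ q g, Rel m dims α β q g → H q = ((g i)⁻¹).1) := by
    intro i
    by_cases hi : i ≤ m + 1
    · induction hi using Nat.decreasingInduction with
      | self =>
        refine ⟨fun _ => 1, continuous_const, fun _ q g h => ?_⟩
        rw [h.1]; simp
      | of_succ k hk ih =>
        obtain ⟨H, hc, hH⟩ := ih
        obtain ⟨L, hL⟩ := leftInv (α k) (hα k (by omega))
        refine ⟨fun q => L * H q * q.1 k, by fun_prop, fun _ q g h => ?_⟩
        have h1 := (h.2 k (by omega)).1
        have h2 := hH (by omega) q g h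
        simp only [h1, h2, glActA]
        have h3 : ((g (k+1))⁻¹).1 * (g (k+1)).1 = 1 := (g (k+1)).inv_mul
        calc _ = L * (((g (k+1))⁻¹).1 * (g (k+1)).1) * α k * ((g k)⁻¹).1 := by
              simp only [Matrix.mul_assoc]
          _ = _ := by rw [h3, Matrix.mul_one, hL, Matrix.one_mul]
    · exact ⟨fun _ => 1, continuous_const, fun h => absurd h hi⟩
  choose H hc hH using key
  exact ⟨H, hc, fun q g h i hi => hH i hi q g h⟩

lemma recB (hβ : ∀ i ≤ m, Function.Surjective (β i).mulVecLin) :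
    ∃ G : ∀ i, Q dims → Matrix (Fin (dims i)) (Fin (dims i)) ℂ, (∀ i, Continuous (G i)) ∧
      ∀ q g, Rel m dims α β q g → ∀ i ≤ m + 1, G i q = (g i).1 := by
  have key : ∀ i, ∃ H : Q dims → Matrix (Fin (dims i)) (Fin (dims i)) ℂ, Continuous H ∧
      (i ≤ m + 1 → ∀ q g, Rel m dims α β q g → H q = (g i).1) := by
    intro i
    by_cases hi : i ≤ m + 1
    · induction hi using Nat.decreasingInduction with
      | self =>
        refine ⟨fun _ => 1, continuous_const, fun _ q g h => ?_⟩
        rw [h.1]; simp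
      | of_succ k hk ih =>
        obtain ⟨H, hc, hH⟩ := ih
        obtain ⟨R, hR⟩ := rightInv (β k) (hβ k (by omega))
        refine ⟨fun q => q.2 k * H q * R, by fun_prop, fun _ q g h => ?_⟩
        have h1 := (h.2 k (by omega)).2
        have h2 := hH (by omega) q g h
        simp only [h1, h2, glActB]
        have h3 : ((g (k+1))⁻¹).1 * (g (k+1)).1 = 1 := (g (k+1)).inv_mul
        calc _ = (g k).1 * (β k * ((((g (k+1))⁻¹).1 * (g (k+1)).1) * R)) := by
              simp only [Matrix.mul_assoc]
          _ = _ := by rw [h3, Matrix.one_mul, hR, Matrix.mul_one]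
    · exact ⟨fun _ => 1, continuous_const, fun h => absurd h hi⟩
  choose H hc hH using key
  exact ⟨H, hc, fun q g h i hi => hH i hi q g h⟩

/-- The closed set of equations. -/
lemma closedEqs (G H : ∀ i, Q dims → Matrix (Fin (dims i)) (Fin (dims i)) ℂ)
    (hG : ∀ i, Continuous (G i)) (hH : ∀ i, Continuous (H i)) :
    IsClosed {q : Q dims | (∀ i, i ≤ m + 1 → G i q * H i q = 1) ∧ G (m+1) q = 1 ∧
      (∀ i, i ≤ m → q.1 i = G (i+1) q * α i * H i q ∧ q.2 i = G i q * β i * H (i+1) q) ∧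
      (∀ i, m + 1 ≤ i → q.1 i = α i ∧ q.2 i = β i)} := by
  simp only [Set.ofPred_and, Set.ofPred_forall]
  refine IsClosed.inter ?_ (IsClosed.inter ?_ (IsClosed.inter ?_ ?_))
  · refine isClosed_iInter fun i => isClosed_iInter fun _ => isClosed_eq ?_ ?_ <;> fun_prop
  · refine isClosed_eq ?_ ?_ <;> fun_prop
  · refine isClosed_iInter fun i => isClosed_iInter fun _ => IsClosed.inter ?_ ?_ <;>
      refine isClosed_eq ?_ ?_ <;> fun_prop
  · refine isClosed_iInter fun i => isClosed_iInter fun _ => IsClosed.inter ?_ ?_ <;>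
      refine isClosed_eq ?_ ?_ <;> fun_prop

lemma closedGL (G H : ∀ i, Q dims → Matrix (Fin (dims i)) (Fin (dims i)) ℂ)
    (hG : ∀ i, Continuous (G i)) (hH : ∀ i, Continuous (H i))
    (hG' : ∀ q g, Rel m dims α β q g → ∀ i ≤ m + 1, G i q = (g i).1)
    (hH' : ∀ q g, Rel m dims α β q g → ∀ i ≤ m + 1, H i q = ((g i)⁻¹).1) :
    IsClosed {q : Q dims |
          ∃ g : ∀ i : ℕ, Matrix.GeneralLinearGroup (Fin (dims i)) ℂ,
            g (m+1) = 1 ∧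
            (∀ i ≤ m, q.1 i = glActA dims g α i ∧ q.2 i = glActB dims g β i) ∧
            (∀ i, m + 1 ≤ i → q.1 i = α i ∧ q.2 i = β i)} := by
  convert closedEqs (m := m) (α := α) (β := β) G H hG hH using 1
  ext q
  constructor
  · rintro ⟨g, h1, h2, h3⟩
    have hr : Rel m dims α β q g := ⟨h1, h2⟩
    have eG := hG' q g hr
    have eH := hH' q g hr
    refine ⟨fun i hi => ?_, ?_, fun i hi => ?_, h3⟩
    · rw [eG i hi, eH i hi]; exact (g i).mul_inv
    · rw [eG _ le_rfl, h1]; rfl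
    · rw [eG i (by omega), eH i (by omega), eG (i+1) (by omega), eH (i+1) (by omega)]
      exact h2 i hi
  · rintro ⟨h1, h2, h3, h4⟩
    let g : ∀ i : ℕ, Matrix.GeneralLinearGroup (Fin (dims i)) ℂ := fun i =>
      if hi : i ≤ m + 1 then ⟨G i q, H i q, h1 i hi, mul_eq_one_comm.1 (h1 i hi)⟩ else 1
    have eG : ∀ i ≤ m + 1, (g i).1 = G i q := fun i hi => by simp [g, hi]
    have eH : ∀ i ≤ m + 1, ((g i)⁻¹).1 = H i q := fun i hi => by
      simp only [g, dif_pos hi]; rfl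
    refine ⟨g, Units.ext (by rw [eG _ le_rfl, h2]; rfl), fun i hi => ?_, h4⟩
    unfold glActA glActB
    rw [eG i (by omega), eH i (by omega), eG (i+1) (by omega), eH (i+1) (by omega)]
    exact h3 i hi

/-- Coercion of families. -/
def toGL (g : ∀ i : ℕ, Matrix.SpecialLinearGroup (Fin (dims i)) ℂ) :
    ∀ i : ℕ, Matrix.GeneralLinearGroup (Fin (dims i)) ℂ := fun i =>
  ⟨(g i).1, ((g i)⁻¹).1, by rw [← Matrix.SpecialLinearGroup.coe_mul]; simp,
    by rw [← Matrix.SpecialLinearGroup.coe_mul]; simp⟩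

lemma closedSL (G H : ∀ i, Q dims → Matrix (Fin (dims i)) (Fin (dims i)) ℂ)
    (hG : ∀ i, Continuous (G i)) (hH : ∀ i, Continuous (H i))
    (hG' : ∀ q (g : ∀ i : ℕ, Matrix.SpecialLinearGroup (Fin (dims i)) ℂ),
      Rel m dims α β q (toGL g) → ∀ i ≤ m + 1, G i q = (g i).1)
    (hH' : ∀ q (g : ∀ i : ℕ, Matrix.SpecialLinearGroup (Fin (dims i)) ℂ),
      Rel m dims α β q (toGL g) → ∀ i ≤ m + 1, H i q = ((g i)⁻¹).1) :
    IsClosed {q : Q dims |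
          ∃ g : ∀ i : ℕ, Matrix.SpecialLinearGroup (Fin (dims i)) ℂ,
            g (m+1) = 1 ∧
            (∀ i ≤ m, q.1 i = slActA dims g α i ∧ q.2 i = slActB dims g β i) ∧
            (∀ i, m + 1 ≤ i → q.1 i = α i ∧ q.2 i = β i)} := by
  have hdet : IsClosed {q : Q dims | ∀ i, i ≤ m + 1 → (G i q).det = 1} := by
    simp only [Set.ofPred_forall]
    refine isClosed_iInter fun i => isClosed_iInter fun _ => isClosed_eq ?_ ?_
    · exact (hG i).matrix_det
    · fun_prop
  convert (closedEqs (m := m) (α := α) (β := β) G H hG hH).inter hdet using 1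
  ext q
  constructor
  · rintro ⟨g, h1, h2, h3⟩
    have hr : Rel m dims α β q (toGL g) := ⟨Units.ext (by simp [toGL, h1]), h2⟩
    have eG := hG' q g hr
    have eH := hH' q g hr
    refine ⟨⟨fun i hi => ?_, ?_, fun i hi => ?_, h3⟩, fun i hi => ?_⟩
    · rw [eG i hi, eH i hi]; exact (toGL g i).mul_inv
    · rw [eG _ le_rfl, h1]; rfl
    · rw [eG i (by omega), eH i (by omega), eG (i+1) (by omega), eH (i+1) (by omega)]
      exact h2 i hi
    · rw [eG i hi]; exact (g i).2
  · rintro ⟨⟨h1, h2, h3, h4⟩, h5⟩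
    let g : ∀ i : ℕ, Matrix.SpecialLinearGroup (Fin (dims i)) ℂ := fun i =>
      if hi : i ≤ m + 1 then ⟨G i q, h5 i hi⟩ else 1
    have eG : ∀ i ≤ m + 1, (g i).1 = G i q := fun i hi => by simp [g, hi]
    have eH : ∀ i ≤ m + 1, ((g i)⁻¹).1 = H i q := fun i hi => by
      have e1 : ((g i)⁻¹).1 * (g i).1 = 1 := (toGL g i).inv_mul
      rw [eG i hi] at e1
      exact left_inv_eq_right_inv e1 (h1 i hi)
    refine ⟨g, Subtype.ext (by rw [eG _ le_rfl, h2]; rfl), fun i hi => ?_, h4⟩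
    unfold slActA slActB
    rw [eG i (by omega), eH i (by omega), eG (i+1) (by omega), eH (i+1) (by omega)]
    exact h3 i hi

lemma rel_one : Rel m dims α β (α, β) (fun _ => 1) :=
  ⟨rfl, fun i _ => ⟨by simp [glActA], by simp [glActB]⟩⟩

lemma toGL_one_of {g : ∀ i : ℕ, Matrix.SpecialLinearGroup (Fin (dims i)) ℂ} {i : ℕ}
    (h : toGL g i = 1) : g i = 1 := Subtype.ext (congrArg Units.val h)

end QuiverAux

/-- (Here the paper's `r` is `m + 1`, so `r ≥ 2` is `1 ≤ m`;
the quiver maps are `α i : ℂ^(dims i) → ℂ^(dims (i+1))` and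
`β i : ℂ^(dims (i+1)) → ℂ^(dims i)` for `i = 0, …, m`, with `dims 0 = 0`.
The group element acts with `g_{m+1} = 1`, and the components of index `> m`
are unaffected.)

(1) If each `α_i` is injective and each `β_i` is surjective (`i = 1, …, m`),
then the orbit of `(α, β)` under `∏_{i=1}^{m} GL(dims i, ℂ)` is closed in the
product matrix space and the stabiliser is trivial.
(2) If all the `α_i` are injective, or all the `β_i` are surjective, then the
orbit of `(α, β)` under `∏_{i=1}^{m} SL(dims i, ℂ)` is closed with trivial
stabiliser. -/
theorem statement13 (m : ℕ) (hm : 1 ≤ m) (dims : ℕ → ℕ) (h0 : dims 0 = 0)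
    (hmono : ∀ i ≤ m, dims i ≤ dims (i+1))
    (α : ∀ i : ℕ, Matrix (Fin (dims (i+1))) (Fin (dims i)) ℂ)
    (β : ∀ i : ℕ, Matrix (Fin (dims i)) (Fin (dims (i+1))) ℂ) :
    ((∀ i, 1 ≤ i → i ≤ m →
        Function.Injective (α i).mulVecLin ∧ Function.Surjective (β i).mulVecLin) →
      (IsClosed {q : (∀ i : ℕ, Matrix (Fin (dims (i+1))) (Fin (dims i)) ℂ) ×
            (∀ i : ℕ, Matrix (Fin (dims i)) (Fin (dims (i+1))) ℂ) |
          ∃ g : ∀ i : ℕ, Matrix.GeneralLinearGroup (Fin (dims i)) ℂ,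
            g (m+1) = 1 ∧
            (∀ i ≤ m, q.1 i = glActA dims g α i ∧ q.2 i = glActB dims g β i) ∧
            (∀ i, m + 1 ≤ i → q.1 i = α i ∧ q.2 i = β i)} ∧
        (∀ g : ∀ i : ℕ, Matrix.GeneralLinearGroup (Fin (dims i)) ℂ,
          g (m+1) = 1 →
          (∀ i ≤ m, glActA dims g α i = α i ∧ glActB dims g β i = β i) →
          ∀ i, 1 ≤ i → i ≤ m → g i = 1))) ∧
    (((∀ i, 1 ≤ i → i ≤ m → Function.Injective (α i).mulVecLin) ∨
        (∀ i, 1 ≤ i → i ≤ m → Function.Surjective (β i).mulVecLin)) →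
      (IsClosed {q : (∀ i : ℕ, Matrix (Fin (dims (i+1))) (Fin (dims i)) ℂ) ×
            (∀ i : ℕ, Matrix (Fin (dims i)) (Fin (dims (i+1))) ℂ) |
          ∃ g : ∀ i : ℕ, Matrix.SpecialLinearGroup (Fin (dims i)) ℂ,
            g (m+1) = 1 ∧
            (∀ i ≤ m, q.1 i = slActA dims g α i ∧ q.2 i = slActB dims g β i) ∧
            (∀ i, m + 1 ≤ i → q.1 i = α i ∧ q.2 i = β i)} ∧
        (∀ g : ∀ i : ℕ, Matrix.SpecialLinearGroup (Fin (dims i)) ℂ,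
          g (m+1) = 1 →
          (∀ i ≤ m, slActA dims g α i = α i ∧ slActB dims g β i = β i) →
          ∀ i, 1 ≤ i → i ≤ m → g i = 1))) := by
  have inj0 : Function.Injective (α 0).mulVecLin := by
    have : IsEmpty (Fin (dims 0)) := by rw [h0]; infer_instance
    exact Function.injective_of_subsingleton _
  have surj0 : Function.Surjective (β 0).mulVecLin := by
    have : IsEmpty (Fin (dims 0)) := by rw [h0]; infer_instance
    exact fun y => ⟨0, Subsingleton.elim _ _⟩
  have extA : (∀ i, 1 ≤ i → i ≤ m → Function.Injective (α i).mulVecLin) →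
      ∀ i ≤ m, Function.Injective (α i).mulVecLin := by
    intro h i hi
    rcases Nat.eq_zero_or_pos i with rfl | h'
    · exact inj0
    · exact h i h' hi
  have extB : (∀ i, 1 ≤ i → i ≤ m → Function.Surjective (β i).mulVecLin) →
      ∀ i ≤ m, Function.Surjective (β i).mulVecLin := by
    intro h i hi
    rcases Nat.eq_zero_or_pos i with rfl | h'
    · exact surj0
    · exact h i h' hi
  constructor
  · intro h
    obtain ⟨H, hH, hH'⟩ := QuiverAux.recA (β := β) (extA fun i h1 h2 => (h i h1 h2).1)
    obtain ⟨G, hG, hG'⟩ := QuiverAux.recB (α := α) (extB fun i h1 h2 => (h i h1 h2).2)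
    refine ⟨QuiverAux.closedGL G H hG hH hG' hH', fun g h1 h2 i _ hi => Units.ext ?_⟩
    have hr : QuiverAux.Rel m dims α β (α, β) g :=
      ⟨h1, fun i hi => ⟨(h2 i hi).1.symm, (h2 i hi).2.symm⟩⟩
    exact (hG' _ g hr i (by omega)).symm.trans (hG' _ _ QuiverAux.rel_one i (by omega))
  · have hrel : ∀ g : ∀ i : ℕ, Matrix.SpecialLinearGroup (Fin (dims i)) ℂ, g (m+1) = 1 →
          (∀ i ≤ m, slActA dims g α i = α i ∧ slActB dims g β i = β i) →
          QuiverAux.Rel m dims α β (α, β) (QuiverAux.toGL g) := fun g h1 h2 =>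
      ⟨Units.ext (by simp [QuiverAux.toGL, h1]),
        fun i hi => ⟨(h2 i hi).1.symm, (h2 i hi).2.symm⟩⟩
    rintro (h | h)
    · obtain ⟨H, hH, hH'⟩ := QuiverAux.recA (β := β) (extA h)
      refine ⟨QuiverAux.closedSL (fun i q => (H i q).adjugate) H
        (fun i => (hH i).matrix_adjugate) hH (fun q g hr i hi => ?_)
        (fun q g hr i hi => hH' q _ hr i hi), fun g h1 h2 i _ hi => ?_⟩
      · have e : H i q = ((g i)⁻¹).1 := hH' q _ hr i hi
        have e2 : (((g i)⁻¹)⁻¹).1 = (((g i)⁻¹).1).adjugate :=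
          Matrix.SpecialLinearGroup.coe_inv _
        simp only [e]
        rw [← e2, inv_inv]
      · have := (hH' _ _ (hrel g h1 h2) i (by omega)).symm.trans
          (hH' _ _ QuiverAux.rel_one i (by omega))
        exact QuiverAux.toGL_one_of (inv_injective (Units.ext this))
    · obtain ⟨G, hG, hG'⟩ := QuiverAux.recB (α := α) (extB h)
      refine ⟨QuiverAux.closedSL G (fun i q => (G i q).adjugate) hG
        (fun i => (hG i).matrix_adjugate) (fun q g hr i hi => hG' q _ hr i hi)
        (fun q g hr i hi => ?_), fun g h1 h2 i _ hi => ?_⟩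
      · have e : G i q = (g i).1 := hG' q _ hr i hi
        simp only [e]
        exact (Matrix.SpecialLinearGroup.coe_inv _).symm
      · have := (hG' _ _ (hrel g h1 h2) i (by omega)).symm.trans
          (hG' _ _ QuiverAux.rel_one i (by omega))
        exact QuiverAux.toGL_one_of (Units.ext this)
end

section
/- Fix integers r ≥ 2 and 0 = n_0 ≤ n_1 ≤ … ≤ n_r = n, and a quiver (α, β) satisfying the equations α_{i−1} β_{i−1} = β_i α_i for all i = 1,…,r−1 (with α_0 = β_0 = 0), i.e., the complex moment map equations at level zero for ∏_{i=1}^{r−1} GL(n_i,ℂ). Then the orbit of (α, β) under the action of ∏_{i=1}^{r−1} GL(n_i,ℂ) is a closed subset of the product matrix space if and only if for every i = 1,…,r−1 the space ℂ^{n_i} is the internal direct sum of ker α_i and the range of β_i (i.e., ker α_i ∩ range β_i = 0 and ker α_i + range β_i = ℂ^{n_i}); equivalently, the quiver is the direct sum of a subquiver in which all the maps α are injective and all the maps β are surjective, and a subquiver in which all maps are zero. -/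
theorem qs_compl {U V : Type*} [AddCommGroup U] [Module ℂ U] [AddCommGroup V] [Module ℂ V]
    [FiniteDimensional ℂ U] [FiniteDimensional ℂ V]
    (a a' : U →ₗ[ℂ] V) (b b' : V →ₗ[ℂ] U)
    (hc : IsCompl (LinearMap.ker a) (LinearMap.range b))
    (ha : Module.finrank ℂ (LinearMap.range a') ≤ Module.finrank ℂ (LinearMap.range a))
    (hb : Module.finrank ℂ (LinearMap.range b') ≤ Module.finrank ℂ (LinearMap.range b))
    (g : V ≃ₗ[ℂ] V) (hg : ∀ x, g (a (b x)) = a' (b' (g x))) :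
    IsCompl (LinearMap.ker a') (LinearMap.range b') ∧
      (LinearMap.range a).map (g : V →ₗ[ℂ] V) = LinearMap.range a' := by
  have hle : (LinearMap.range a).map (g : V →ₗ[ℂ] V) ≤
      (LinearMap.range b').map a' := by
    rintro _ ⟨_, ⟨u, rfl⟩, rfl⟩
    have hu : u ∈ LinearMap.ker a ⊔ LinearMap.range b := by rw [hc.sup_eq_top]; trivial
    obtain ⟨k, hk, _, ⟨y, rfl⟩, rfl⟩ := Submodule.mem_sup.1 hu
    rw [LinearMap.mem_ker] at hk
    refine ⟨b' (g y), ⟨_, rfl⟩, ?_⟩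
    rw [← hg]; simp [hk]
  have hle2 : (LinearMap.range b').map a' ≤ LinearMap.range a' := LinearMap.map_le_range
  have heq : (LinearMap.range a).map (g : V →ₗ[ℂ] V) = LinearMap.range a' := by
    apply Submodule.eq_of_le_of_finrank_le (hle.trans hle2)
    rw [LinearEquiv.finrank_map_eq]; exact ha
  refine ⟨?_, heq⟩
  have hsup : LinearMap.ker a' ⊔ LinearMap.range b' = ⊤ := by
    rw [eq_top_iff]
    intro x _
    have hx : a' x ∈ (LinearMap.range b').map a' := hle (heq ▸ ⟨x, rfl⟩)
    obtain ⟨y, hy, hxy⟩ := hx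
    refine Submodule.mem_sup.2 ⟨x - y, ?_, y, hy, by simp⟩
    simp [hxy]
  have h1 := Submodule.finrank_sup_add_finrank_inf_eq (LinearMap.ker a') (LinearMap.range b')
  rw [hsup, finrank_top] at h1
  have h2 := LinearMap.finrank_range_add_finrank_ker a'
  have h3 := LinearMap.finrank_range_add_finrank_ker a
  have h4 := Submodule.finrank_add_eq_of_isCompl hc
  have h5 : Module.finrank ℂ (LinearMap.range a') = Module.finrank ℂ (LinearMap.range a) := by
    rw [← heq, LinearEquiv.finrank_map_eq]
  refine ⟨disjoint_iff.2 ?_, codisjoint_iff.2 hsup⟩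
  apply Submodule.finrank_eq_zero.1
  omega

theorem qs_bij {U V : Type*} [AddCommGroup U] [Module ℂ U] [AddCommGroup V] [Module ℂ V]
    (a : U →ₗ[ℂ] V) (R : Submodule ℂ U) (hc : IsCompl (LinearMap.ker a) R) :
    Function.Bijective (a.rangeRestrict ∘ₗ R.subtype) := by
  constructor
  · rw [← LinearMap.ker_eq_bot, LinearMap.ker_eq_bot']
    rintro ⟨x, hx⟩ h
    have h' : a x = 0 := congrArg Subtype.val h
    have : x ∈ LinearMap.ker a ⊓ R := ⟨h', hx⟩
    rw [hc.inf_eq_bot] at this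
    exact Subtype.ext ((Submodule.mem_bot ℂ).1 this)
  · rintro ⟨_, u, rfl⟩
    have hu : u ∈ LinearMap.ker a ⊔ R := by rw [hc.sup_eq_top]; trivial
    obtain ⟨k, hk, y, hy, rfl⟩ := Submodule.mem_sup.1 hu
    rw [LinearMap.mem_ker] at hk
    exact ⟨⟨y, hy⟩, Subtype.ext (by simp [hk])⟩

theorem qs_step {U V : Type*} [AddCommGroup U] [Module ℂ U] [AddCommGroup V] [Module ℂ V]
    [FiniteDimensional ℂ U] [FiniteDimensional ℂ V]
    (a a' : U →ₗ[ℂ] V) (b b' : V →ₗ[ℂ] U)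
    (hc : IsCompl (LinearMap.ker a) (LinearMap.range b))
    (ha : Module.finrank ℂ (LinearMap.range a') ≤ Module.finrank ℂ (LinearMap.range a))
    (hb : Module.finrank ℂ (LinearMap.range b') ≤ Module.finrank ℂ (LinearMap.range b))
    (g : V ≃ₗ[ℂ] V) (hg : ∀ x, g (a (b x)) = a' (b' (g x))) :
    ∃ h : U ≃ₗ[ℂ] U, (∀ x, g (a x) = a' (h x)) ∧ (∀ y, h (b y) = b' (g y)) := by
  obtain ⟨hc', heq⟩ := qs_compl a a' b b' hc ha hb g hg
  let e1 := LinearEquiv.ofBijective _ (qs_bij a _ hc)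
  let e1' := LinearEquiv.ofBijective _ (qs_bij a' _ hc')
  let eg := g.ofSubmodules _ _ heq
  let eR := e1.trans (eg.trans e1'.symm)
  have hk : Module.finrank ℂ (LinearMap.ker a) = Module.finrank ℂ (LinearMap.ker a') := by
    have h2 := LinearMap.finrank_range_add_finrank_ker a'
    have h3 := LinearMap.finrank_range_add_finrank_ker a
    have := eg.finrank_eq
    omega
  let eK := LinearEquiv.ofFinrankEq _ _ hk
  let h := (Submodule.prodEquivOfIsCompl _ _ hc).symm.trans
    ((eK.prodCongr eR).trans (Submodule.prodEquivOfIsCompl _ _ hc'))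
  have hR : ∀ y : LinearMap.range b, a' (eR y) = g (a y) := by
    intro y
    have : e1' (eR y) = eg (e1 y) := by simp [eR]
    exact congrArg Subtype.val this
  have hhK : ∀ x : LinearMap.ker a, h x = eK x := by
    intro x
    simp [h]
  have hhR : ∀ x : LinearMap.range b, h x = eR x := by
    intro x
    simp [h]
  have h1 : ∀ x, g (a x) = a' (h x) := by
    intro u
    have hu : u ∈ LinearMap.ker a ⊔ LinearMap.range b := by rw [hc.sup_eq_top]; trivial
    obtain ⟨k, hk, y, hy, rfl⟩ := Submodule.mem_sup.1 hu
    have e1 := hhK ⟨k, hk⟩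
    have e2 := hhR ⟨y, hy⟩
    simp only at e1 e2
    rw [map_add h, e1, e2, map_add a', hR, LinearMap.mem_ker.1 (eK ⟨k, hk⟩).2, map_add,
      LinearMap.mem_ker.1 hk, zero_add, zero_add]
  refine ⟨h, h1, fun y => ?_⟩
  have e2 := hhR ⟨b y, y, rfl⟩
  simp only at e2
  have hd : h (b y) - b' (g y) ∈ LinearMap.ker a' ⊓ LinearMap.range b' := by
    constructor
    · simp [← h1, hg]
    · rw [e2]; exact Submodule.sub_mem _ (eR _).2 ⟨_, rfl⟩
  rw [hc'.inf_eq_bot] at hd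
  exact sub_eq_zero.1 ((Submodule.mem_bot ℂ).1 hd)

theorem qs_step_mat {p q : ℕ} (a a' : Matrix (Fin q) (Fin p) ℂ) (b b' : Matrix (Fin p) (Fin q) ℂ)
    (hc : IsCompl (LinearMap.ker a.mulVecLin) (LinearMap.range b.mulVecLin))
    (ha : a'.rank ≤ a.rank) (hb : b'.rank ≤ b.rank)
    (g : Matrix.GeneralLinearGroup (Fin q) ℂ)
    (hg : (g : Matrix (Fin q) (Fin q) ℂ) * (a * b) = (a' * b') * (g : Matrix (Fin q) (Fin q) ℂ)) :
    ∃ h : Matrix.GeneralLinearGroup (Fin p) ℂ,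
      (g : Matrix (Fin q) (Fin q) ℂ) * a = a' * (h : Matrix (Fin p) (Fin p) ℂ) ∧
      (h : Matrix (Fin p) (Fin p) ℂ) * b = b' * (g : Matrix (Fin q) (Fin q) ℂ) := by
  let G := LinearMap.GeneralLinearGroup.generalLinearEquiv ℂ _ (Matrix.GeneralLinearGroup.toLin g)
  have hG : ∀ x, G x = (g : Matrix (Fin q) (Fin q) ℂ).mulVec x := fun x => rfl
  obtain ⟨h, h1, h2⟩ := qs_step a.mulVecLin a'.mulVecLin b.mulVecLin b'.mulVecLin hc ha hb G (by
    intro x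
    simp only [hG, Matrix.mulVecLin_apply, Matrix.mulVec_mulVec]
    rw [hg, Matrix.mul_assoc])
  let H := Matrix.GeneralLinearGroup.toLin.symm
    ((LinearMap.GeneralLinearGroup.generalLinearEquiv ℂ _).symm h)
  have hH : ∀ x, h x = (H : Matrix (Fin p) (Fin p) ℂ).mulVec x := by
    intro x
    have : (Matrix.toLin' (H : Matrix (Fin p) (Fin p) ℂ)) = (h : _ →ₗ[ℂ] _) := by
      have := congrArg Units.val (Matrix.GeneralLinearGroup.toLin.apply_symm_apply
        ((LinearMap.GeneralLinearGroup.generalLinearEquiv ℂ _).symm h))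
      exact this
    rw [← Matrix.toLin'_apply, this]; rfl
  refine ⟨H, ?_, ?_⟩
  · apply Matrix.toLin'.injective
    apply LinearMap.ext; intro x
    have := h1 x
    simpa [hG, hH, Matrix.mulVec_mulVec] using this
  · apply Matrix.toLin'.injective
    apply LinearMap.ext; intro x
    have := h2 x
    simpa [hG, hH, Matrix.mulVec_mulVec] using this

theorem qs_rank_closed {p q r : ℕ} : IsClosed {M : Matrix (Fin p) (Fin q) ℂ | M.rank ≤ r} := by
  have h := isOpen_setOfPred_nat_le_rank (𝕜 := ℂ) (E := Fin q → ℂ) (F := Fin p → ℂ) (r+1)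
  let L : Matrix (Fin p) (Fin q) ℂ →ₗ[ℂ] ((Fin q → ℂ) →L[ℂ] (Fin p → ℂ)) :=
    LinearMap.toContinuousLinearMap.toLinearMap ∘ₗ Matrix.toLin'.toLinearMap
  have hL : Continuous L := L.continuous_of_finiteDimensional
  have := (h.preimage hL).isClosed_compl
  convert this using 1
  ext M
  have : ((L M : (Fin q → ℂ) →L[ℂ] (Fin p → ℂ)) : (Fin q → ℂ) →ₗ[ℂ] (Fin p → ℂ)).rank = M.rank := by
    have : ((L M : (Fin q → ℂ) →L[ℂ] (Fin p → ℂ)) : (Fin q → ℂ) →ₗ[ℂ] (Fin p → ℂ)) = M.mulVecLin := rfl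
    rw [this, LinearMap.rank, Matrix.rank, Module.finrank_eq_rank]
  simp only [Set.mem_ofPred_eq, Set.mem_compl_iff, Set.mem_preimage, this, Nat.cast_le]
  omega

/-- The orbit of the statement. -/
def qsOrbit (m : ℕ) (dims : ℕ → ℕ)
    (α : ∀ i : ℕ, Matrix (Fin (dims (i+1))) (Fin (dims i)) ℂ)
    (β : ∀ i : ℕ, Matrix (Fin (dims i)) (Fin (dims (i+1))) ℂ) :
    Set ((∀ i : ℕ, Matrix (Fin (dims (i+1))) (Fin (dims i)) ℂ) ×
          (∀ i : ℕ, Matrix (Fin (dims i)) (Fin (dims (i+1))) ℂ)) :=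
  {q | ∃ g : ∀ i : ℕ, Matrix.GeneralLinearGroup (Fin (dims i)) ℂ,
          g (m+1) = 1 ∧
          (∀ i ≤ m, q.1 i = glActA dims g α i ∧ q.2 i = glActB dims g β i) ∧
          (∀ i, m + 1 ≤ i → q.1 i = α i ∧ q.2 i = β i)}

theorem qs_rank_conj {p q : ℕ} (g : Matrix.GeneralLinearGroup (Fin p) ℂ)
    (h : Matrix.GeneralLinearGroup (Fin q) ℂ) (a : Matrix (Fin p) (Fin q) ℂ) :
    ((g : Matrix (Fin p) (Fin p) ℂ) * a * ((h⁻¹ : Matrix.GeneralLinearGroup (Fin q) ℂ) :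
      Matrix (Fin q) (Fin q) ℂ)).rank = a.rank := by
  rw [Matrix.rank_mul_eq_left_of_isUnit_det, Matrix.rank_mul_eq_right_of_isUnit_det]
  · exact (Matrix.isUnit_iff_isUnit_det _).1 g.isUnit
  · exact (Matrix.isUnit_iff_isUnit_det _).1 (h⁻¹).isUnit

/-- Closed set of candidate quivers. -/
def qsSet (m : ℕ) (dims : ℕ → ℕ)
    (α : ∀ i : ℕ, Matrix (Fin (dims (i+1))) (Fin (dims i)) ℂ)
    (β : ∀ i : ℕ, Matrix (Fin (dims i)) (Fin (dims (i+1))) ℂ) :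
    Set ((∀ i : ℕ, Matrix (Fin (dims (i+1))) (Fin (dims i)) ℂ) ×
          (∀ i : ℕ, Matrix (Fin (dims i)) (Fin (dims (i+1))) ℂ)) :=
  {q | (∀ j < m, q.1 j * q.2 j = q.2 (j+1) * q.1 (j+1)) ∧
    q.1 m * q.2 m = α m * β m ∧
    (∀ i ≤ m, (q.1 i).rank ≤ (α i).rank) ∧
    (∀ i ≤ m, (q.2 i).rank ≤ (β i).rank) ∧
    (∀ i, m + 1 ≤ i → q.1 i = α i) ∧ (∀ i, m + 1 ≤ i → q.2 i = β i)}

theorem qsSet_closed (m : ℕ) (dims : ℕ → ℕ)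
    (α : ∀ i : ℕ, Matrix (Fin (dims (i+1))) (Fin (dims i)) ℂ)
    (β : ∀ i : ℕ, Matrix (Fin (dims i)) (Fin (dims (i+1))) ℂ) :
    IsClosed (qsSet m dims α β) := by
  have c1 : ∀ i, Continuous (fun q : (∀ i : ℕ, Matrix (Fin (dims (i+1))) (Fin (dims i)) ℂ) ×
          (∀ i : ℕ, Matrix (Fin (dims i)) (Fin (dims (i+1))) ℂ) => q.1 i) := fun i =>
    (continuous_apply i).comp continuous_fst
  have c2 : ∀ i, Continuous (fun q : (∀ i : ℕ, Matrix (Fin (dims (i+1))) (Fin (dims i)) ℂ) ×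
          (∀ i : ℕ, Matrix (Fin (dims i)) (Fin (dims (i+1))) ℂ) => q.2 i) := fun i =>
    (continuous_apply i).comp continuous_snd
  unfold qsSet
  simp only [Set.ofPred_and, Set.ofPred_forall]
  refine IsClosed.inter ?_ (IsClosed.inter ?_ (IsClosed.inter ?_ (IsClosed.inter ?_
    (IsClosed.inter ?_ ?_))))
  · exact isClosed_iInter fun j => isClosed_iInter fun _ =>
      isClosed_eq ((c1 j).matrix_mul (c2 j)) ((c2 _).matrix_mul (c1 _))
  · exact isClosed_eq ((c1 m).matrix_mul (c2 m)) continuous_const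
  · exact isClosed_iInter fun j => isClosed_iInter fun _ => qs_rank_closed.preimage (c1 j)
  · exact isClosed_iInter fun j => isClosed_iInter fun _ => qs_rank_closed.preimage (c2 j)
  · exact isClosed_iInter fun j => isClosed_iInter fun _ => isClosed_eq (c1 j) continuous_const
  · exact isClosed_iInter fun j => isClosed_iInter fun _ => isClosed_eq (c2 j) continuous_const

theorem qs_gl_cancel {p q : ℕ} (g : Matrix.GeneralLinearGroup (Fin p) ℂ)
    (x : Matrix (Fin p) (Fin q) ℂ) :
    ((g⁻¹ : Matrix.GeneralLinearGroup (Fin p) ℂ) : Matrix (Fin p) (Fin p) ℂ) *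
      ((g : Matrix (Fin p) (Fin p) ℂ) * x) = x := by
  rw [← Matrix.mul_assoc, Units.inv_mul, Matrix.one_mul]

theorem qs_backward (m : ℕ) (dims : ℕ → ℕ) (h0 : dims 0 = 0)
    (α : ∀ i : ℕ, Matrix (Fin (dims (i+1))) (Fin (dims i)) ℂ)
    (β : ∀ i : ℕ, Matrix (Fin (dims i)) (Fin (dims (i+1))) ℂ)
    (hmm0 : ∀ j < m, α j * β j = β (j+1) * α (j+1))
    (hc : ∀ i, 1 ≤ i → i ≤ m →
        IsCompl (LinearMap.ker (α i).mulVecLin) (LinearMap.range (β i).mulVecLin)) :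
    IsClosed (qsOrbit m dims α β) := by
  have hc' : ∀ i, i ≤ m →
        IsCompl (LinearMap.ker (α i).mulVecLin) (LinearMap.range (β i).mulVecLin) := by
    intro i hi
    rcases Nat.eq_zero_or_pos i with rfl | h
    · have : IsEmpty (Fin (dims 0)) := by rw [h0]; infer_instance
      have : Subsingleton (Submodule ℂ (Fin (dims 0) → ℂ)) := inferInstance
      exact ⟨disjoint_iff.2 (Subsingleton.elim _ _), codisjoint_iff.2 (Subsingleton.elim _ _)⟩
    · exact hc i h hi
  suffices h : qsOrbit m dims α β = qsSet m dims α β by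
    rw [h]; exact qsSet_closed m dims α β
  ext q
  constructor
  · rintro ⟨g, hg1, hg, hq⟩
    refine ⟨?_, ?_, ?_, ?_, fun i hi => (hq i hi).1, fun i hi => (hq i hi).2⟩
    · intro j hj
      rw [(hg j hj.le).1, (hg j hj.le).2, (hg (j+1) hj).1, (hg (j+1) hj).2]
      simp only [glActA, glActB, Matrix.mul_assoc, qs_gl_cancel]
      rw [← Matrix.mul_assoc (α j), hmm0 j hj]
      simp only [Matrix.mul_assoc]
    · rw [(hg m le_rfl).1, (hg m le_rfl).2]
      simp only [glActA, glActB, Matrix.mul_assoc, qs_gl_cancel]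
      simp [hg1]
    · intro i hi
      rw [(hg i hi).1]; exact (qs_rank_conj _ _ _).le
    · intro i hi
      rw [(hg i hi).2]; exact (qs_rank_conj _ _ _).le
  · rintro ⟨h1, h2, h3, h4, h5, h6⟩
    have key : ∀ k, k ≤ m + 1 → ∃ g : ∀ i : ℕ, Matrix.GeneralLinearGroup (Fin (dims i)) ℂ,
        g (m+1) = 1 ∧ ∀ i, k ≤ i → i ≤ m →
          (g (i+1) : Matrix (Fin (dims (i+1))) (Fin (dims (i+1))) ℂ) * α i = q.1 i * (g i : Matrix (Fin (dims i)) (Fin (dims i)) ℂ) ∧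
          (g i : Matrix (Fin (dims i)) (Fin (dims i)) ℂ) * β i = q.2 i * (g (i+1) : Matrix (Fin (dims (i+1))) (Fin (dims (i+1))) ℂ) := by
      intro k hk
      induction hk using Nat.decreasingInduction with
      | self => exact ⟨fun _ => 1, rfl, fun i h h' => by omega⟩
      | of_succ k hk ih =>
        obtain ⟨g, hg1, hg⟩ := ih
        have hkm : k ≤ m := by omega
        have hT : (g (k+1) : Matrix (Fin (dims (k+1))) (Fin (dims (k+1))) ℂ) * (α k * β k) =
            (q.1 k * q.2 k) * (g (k+1) : Matrix (Fin (dims (k+1))) (Fin (dims (k+1))) ℂ) := by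
          rcases Nat.lt_or_ge k m with h | h
          · obtain ⟨e1, e2⟩ := hg (k+1) le_rfl h
            rw [hmm0 k h, h1 k h, ← Matrix.mul_assoc, e2, Matrix.mul_assoc, e1, Matrix.mul_assoc]
          · obtain rfl : k = m := by omega
            rw [hg1, h2]; simp
        obtain ⟨h, e1, e2⟩ := qs_step_mat (α k) (q.1 k) (β k) (q.2 k) (hc' k hkm)
          (h3 k hkm) (h4 k hkm) (g (k+1)) hT
        refine ⟨Function.update g k h, ?_, ?_⟩
        · rw [Function.update_of_ne (by omega), hg1]
        · intro i hi him
          rcases Nat.eq_or_lt_of_le hi with rfl | hlt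
          · rw [Function.update_of_ne (by omega), Function.update_self]
            exact ⟨e1, e2⟩
          · rw [Function.update_of_ne (by omega), Function.update_of_ne (by omega)]
            exact hg i hlt him
    obtain ⟨g, hg1, hg⟩ := key 0 (Nat.zero_le _)
    refine ⟨g, hg1, fun i hi => ?_, fun i hi => ⟨h5 i hi, h6 i hi⟩⟩
    obtain ⟨e1, e2⟩ := hg i (Nat.zero_le _) hi
    constructor
    · rw [glActA, e1, Matrix.mul_assoc, Units.mul_inv, Matrix.mul_one]
    · rw [glActB, e2, Matrix.mul_assoc, Units.mul_inv, Matrix.mul_one]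

/-- The unit `x P + y (1 - P)` attached to an idempotent `P`. -/
noncomputable def qsUnit {p : ℕ} (P : Matrix (Fin p) (Fin p) ℂ) (hP : P * P = P) (x y : ℂ)
    (hx : x ≠ 0) (hy : y ≠ 0) : Matrix.GeneralLinearGroup (Fin p) ℂ where
  val := x • P + y • (1 - P)
  inv := x⁻¹ • P + y⁻¹ • (1 - P)
  val_inv := by
    simp [Matrix.mul_add, Matrix.add_mul, Matrix.mul_sub, Matrix.sub_mul, hP, smul_smul, hx, hy]
  inv_val := by
    simp [Matrix.mul_add, Matrix.add_mul, Matrix.mul_sub, Matrix.sub_mul, hP, smul_smul, hx, hy]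

theorem qs_conj_calc {p q : ℕ} (P : Matrix (Fin p) (Fin p) ℂ) (Q : Matrix (Fin q) (Fin q) ℂ)
    (a : Matrix (Fin p) (Fin q) ℂ) (h : P * a * Q = a * Q) (x y : ℂ) (hx : x ≠ 0) (hy : y ≠ 0) :
    (x • P + y • (1 - P)) * a * (x⁻¹ • Q + y⁻¹ • (1 - Q)) =
      (P * a * Q + (1 - P) * a * (1 - Q)) + (x / y) • (P * a * (1 - Q)) := by
  have e : (1 - P) * a * Q = 0 := by
    rw [Matrix.sub_mul, Matrix.sub_mul, h, Matrix.one_mul, sub_self]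
  have : (x • P + y • (1 - P)) * a * (x⁻¹ • Q + y⁻¹ • (1 - Q)) =
    (x * x⁻¹) • (P * a * Q) + (y * y⁻¹) • ((1 - P) * a * (1 - Q)) + (x * y⁻¹) • (P * a * (1 - Q))
      + (y * x⁻¹) • ((1 - P) * a * Q) := by
    generalize 1 - P = P'
    generalize 1 - Q = Q'
    simp only [Matrix.add_mul, Matrix.mul_add, Matrix.smul_mul, Matrix.mul_smul, smul_add, smul_smul]
    rw [mul_comm x⁻¹ x, mul_comm y⁻¹ y, mul_comm x⁻¹ y, mul_comm y⁻¹ x]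
    abel
  rw [this, e, mul_inv_cancel₀ hx, mul_inv_cancel₀ hy, one_smul, one_smul, smul_zero, add_zero,
    div_eq_mul_inv]

theorem qs_degenerate (m : ℕ) (dims : ℕ → ℕ)
    (α : ∀ i : ℕ, Matrix (Fin (dims (i+1))) (Fin (dims i)) ℂ)
    (β : ∀ i : ℕ, Matrix (Fin (dims i)) (Fin (dims (i+1))) ℂ)
    (hcl : IsClosed (qsOrbit m dims α β))
    (P : ∀ i, Matrix (Fin (dims i)) (Fin (dims i)) ℂ) (hP : ∀ i, P i * P i = P i)
    (hPa : ∀ i ≤ m, P (i+1) * α i * P i = α i * P i)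
    (hPb : ∀ i ≤ m, P i * β i * P (i+1) = β i * P (i+1))
    (hPm : P (m+1) = 0 ∨ P (m+1) = 1) :
    ∀ i ≤ m, (P (i+1) * α i * P i + (1 - P (i+1)) * α i * (1 - P i)).rank = (α i).rank ∧
      (P i * β i * P (i+1) + (1 - P i) * β i * (1 - P (i+1))).rank = (β i).rank := by
  let qt : ℂ → (∀ i : ℕ, Matrix (Fin (dims (i+1))) (Fin (dims i)) ℂ) ×
          (∀ i : ℕ, Matrix (Fin (dims i)) (Fin (dims (i+1))) ℂ) := fun t =>
    (fun i => if i ≤ m then (P (i+1) * α i * P i + (1 - P (i+1)) * α i * (1 - P i)) +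
        t • (P (i+1) * α i * (1 - P i)) else α i,
     fun i => if i ≤ m then (P i * β i * P (i+1) + (1 - P i) * β i * (1 - P (i+1))) +
        t • (P i * β i * (1 - P (i+1))) else β i)
  have hcont : Continuous qt := by
    refine Continuous.prodMk (continuous_pi fun i => ?_) (continuous_pi fun i => ?_)
    · split_ifs <;> fun_prop
    · split_ifs <;> fun_prop
  have hmem : ∀ t : ℂ, t ≠ 0 → qt t ∈ qsOrbit m dims α β := by
    intro t ht
    obtain ⟨x, y, hx, hy, hxy, hone⟩ : ∃ x y : ℂ, ∃ (hx : x ≠ 0) (hy : y ≠ 0), x / y = t ∧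
        x • P (m+1) + y • (1 - P (m+1)) = 1 := by
      rcases hPm with h | h
      · exact ⟨t, 1, ht, one_ne_zero, by simp, by simp [h]⟩
      · exact ⟨1, t⁻¹, one_ne_zero, inv_ne_zero ht, by simp, by simp [h]⟩
    refine ⟨fun i => qsUnit (P i) (hP i) x y hx hy, Units.ext hone, ?_, ?_⟩
    · intro i hi
      constructor
      · have := qs_conj_calc (P (i+1)) (P i) (α i) (hPa i hi) x y hx hy
        rw [hxy] at this
        simp only [qt, if_pos hi]
        exact this.symm
      · have := qs_conj_calc (P i) (P (i+1)) (β i) (hPb i hi) x y hx hy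
        rw [hxy] at this
        simp only [qt, if_pos hi]
        exact this.symm
    · intro i hi
      have : ¬ i ≤ m := by omega
      simp [qt, this]
  have hlim : qt 0 ∈ qsOrbit m dims α β := by
    have h1 : (0 : ℂ) ∈ closure {t : ℂ | t ≠ 0} := by
      have : Dense ({0}ᶜ : Set ℂ) := dense_compl_singleton 0
      exact this 0
    have h2 := closure_mono (s := qt '' {t : ℂ | t ≠ 0}) (t := qsOrbit m dims α β) (by
      rintro _ ⟨t, ht, rfl⟩; exact hmem t ht)
    rw [hcl.closure_eq] at h2
    exact h2 (image_closure_subset_closure_image hcont ⟨0, h1, rfl⟩)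
  obtain ⟨g, -, hg, -⟩ := hlim
  intro i hi
  obtain ⟨e1, e2⟩ := hg i hi
  simp only [qt, if_pos hi, zero_smul, add_zero] at e1 e2
  rw [e1, e2]
  exact ⟨qs_rank_conj _ _ _, qs_rank_conj _ _ _⟩

theorem qs_exists_proj {p : ℕ} (W : Submodule ℂ (Fin p → ℂ)) :
    ∃ P : Matrix (Fin p) (Fin p) ℂ, (∀ x, P.mulVec x ∈ W) ∧ ∀ x ∈ W, P.mulVec x = x := by
  obtain ⟨W', hW⟩ := W.exists_isCompl
  refine ⟨LinearMap.toMatrix' (W.projection W' hW), fun x => ?_, fun x hx => ?_⟩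
  · rw [← Matrix.toLin'_apply, Matrix.toLin'_toMatrix']
    exact (W.projectionOnto W' hW x).2
  · rw [← Matrix.toLin'_apply, Matrix.toLin'_toMatrix']
    exact congrArg Subtype.val (Submodule.projectionOnto_apply_left hW ⟨x, hx⟩)

theorem qs_subrep (m : ℕ) (dims : ℕ → ℕ)
    (α : ∀ i : ℕ, Matrix (Fin (dims (i+1))) (Fin (dims i)) ℂ)
    (β : ∀ i : ℕ, Matrix (Fin (dims i)) (Fin (dims (i+1))) ℂ)
    (hcl : IsClosed (qsOrbit m dims α β))
    (W : ∀ i, Submodule ℂ (Fin (dims i) → ℂ))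
    (hWa : ∀ i ≤ m, ∀ x ∈ W i, (α i).mulVec x ∈ W (i+1))
    (hWb : ∀ i ≤ m, ∀ x ∈ W (i+1), (β i).mulVec x ∈ W i)
    (hWm : W (m+1) = ⊥ ∨ W (m+1) = ⊤) :
    ∃ P : ∀ i, Matrix (Fin (dims i)) (Fin (dims i)) ℂ,
      (∀ i x, (P i).mulVec x ∈ W i) ∧ (∀ i, ∀ x ∈ W i, (P i).mulVec x = x) ∧
      ∀ i ≤ m, (P (i+1) * α i * P i + (1 - P (i+1)) * α i * (1 - P i)).rank = (α i).rank ∧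
      (P i * β i * P (i+1) + (1 - P i) * β i * (1 - P (i+1))).rank = (β i).rank := by
  choose P hP1 hP2 using fun i => qs_exists_proj (W i)
  refine ⟨P, hP1, hP2, qs_degenerate m dims α β hcl P ?_ ?_ ?_ ?_⟩
  · intro i
    apply Matrix.ext_of_mulVec_single
    intro j
    rw [← Matrix.mulVec_mulVec, hP2 _ _ (hP1 _ _)]
  · intro i hi
    apply Matrix.ext_of_mulVec_single
    intro j
    rw [← Matrix.mulVec_mulVec, ← Matrix.mulVec_mulVec, ← Matrix.mulVec_mulVec,
      hP2 _ _ (hWa i hi _ (hP1 _ _))]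
  · intro i hi
    apply Matrix.ext_of_mulVec_single
    intro j
    rw [← Matrix.mulVec_mulVec, ← Matrix.mulVec_mulVec, ← Matrix.mulVec_mulVec,
      hP2 _ _ (hWb i hi _ (hP1 _ _))]
  · rcases hWm with h | h
    · left
      apply Matrix.ext_of_mulVec_single
      intro j
      have := hP1 (m+1) (Pi.single j 1)
      rw [h, Submodule.mem_bot] at this
      rw [this, Matrix.zero_mulVec]
    · right
      apply Matrix.ext_of_mulVec_single
      intro j
      rw [hP2 _ _ (by rw [h]; trivial), Matrix.one_mulVec]

theorem qs_disjoint (m : ℕ) (dims : ℕ → ℕ)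
    (α : ∀ i : ℕ, Matrix (Fin (dims (i+1))) (Fin (dims i)) ℂ)
    (β : ∀ i : ℕ, Matrix (Fin (dims i)) (Fin (dims (i+1))) ℂ)
    (hmm0 : ∀ j < m, α j * β j = β (j+1) * α (j+1))
    (hcl : IsClosed (qsOrbit m dims α β)) (j : ℕ) (hj : j ≤ m) :
    Disjoint (LinearMap.ker (α j).mulVecLin) (LinearMap.range (β j).mulVecLin) := by
  let W : ∀ i, Submodule ℂ (Fin (dims i) → ℂ) := fun i =>
    if i ≤ j then LinearMap.ker (α i).mulVecLin else ⊥
  have hW1 : ∀ i, i ≤ j → W i = LinearMap.ker (α i).mulVecLin := fun i hi => if_pos hi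
  have hW2 : ∀ i, j < i → W i = ⊥ := fun i hi => if_neg (by omega)
  have hWk : ∀ i, ∀ x ∈ W i, (α i).mulVec x = 0 := by
    intro i x hx
    rcases Nat.lt_or_ge j i with h | h
    · rw [hW2 i h, Submodule.mem_bot] at hx
      rw [hx, Matrix.mulVec_zero]
    · rw [hW1 i h] at hx; exact hx
  obtain ⟨P, hP1, hP2, hr⟩ := qs_subrep m dims α β hcl W
    (fun i hi x hx => by rw [hWk i x hx]; exact Submodule.zero_mem _)
    (fun i hi x hx => by
      rcases Nat.lt_or_ge j (i+1) with h | h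
      · rw [hW2 _ h, Submodule.mem_bot] at hx
        rw [hx, Matrix.mulVec_zero]; exact Submodule.zero_mem _
      · rw [hW1 i (by omega), LinearMap.mem_ker, Matrix.mulVecLin_apply, Matrix.mulVec_mulVec,
          hmm0 i (by omega), ← Matrix.mulVec_mulVec, hWk _ x hx, Matrix.mulVec_zero])
    (Or.inl (hW2 _ (by omega)))
  have hP0 : P (j+1) = 0 := by
    apply Matrix.ext_of_mulVec_single
    intro k
    have := hP1 (j+1) (Pi.single k 1)
    rw [hW2 _ (by omega), Submodule.mem_bot] at this
    rw [this, Matrix.zero_mulVec]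
  have h := (hr j hj).2
  rw [hP0, Matrix.mul_zero, zero_add, sub_zero, Matrix.mul_one] at h
  -- the kernel of `(1 - P) β` equals the kernel of `β`
  have hk : LinearMap.ker (β j).mulVecLin = LinearMap.ker ((1 - P j) * β j).mulVecLin := by
    apply Submodule.eq_of_le_of_finrank_le
    · intro x hx
      rw [LinearMap.mem_ker, Matrix.mulVecLin_apply] at hx ⊢
      rw [← Matrix.mulVec_mulVec, hx, Matrix.mulVec_zero]
    · have h2 := LinearMap.finrank_range_add_finrank_ker (β j).mulVecLin
      have h3 := LinearMap.finrank_range_add_finrank_ker ((1 - P j) * β j).mulVecLin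
      unfold Matrix.rank at h
      omega
  rw [Submodule.disjoint_def]
  rintro _ hx ⟨y, rfl⟩
  rw [Matrix.mulVecLin_apply] at hx ⊢
  rw [← hW1 j le_rfl] at hx
  have : y ∈ LinearMap.ker ((1 - P j) * β j).mulVecLin := by
    rw [LinearMap.mem_ker, Matrix.mulVecLin_apply, ← Matrix.mulVec_mulVec, Matrix.sub_mulVec,
      Matrix.one_mulVec, hP2 _ _ hx, sub_self]
  rw [← hk] at this
  exact this

theorem qs_codisjoint (m : ℕ) (dims : ℕ → ℕ)
    (α : ∀ i : ℕ, Matrix (Fin (dims (i+1))) (Fin (dims i)) ℂ)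
    (β : ∀ i : ℕ, Matrix (Fin (dims i)) (Fin (dims (i+1))) ℂ)
    (hmm0 : ∀ j < m, α j * β j = β (j+1) * α (j+1))
    (hcl : IsClosed (qsOrbit m dims α β)) (j : ℕ) (hj : j ≤ m) :
    Codisjoint (LinearMap.ker (α j).mulVecLin) (LinearMap.range (β j).mulVecLin) := by
  let W : ∀ i, Submodule ℂ (Fin (dims i) → ℂ) := fun i =>
    if i ≤ j then LinearMap.range (β i).mulVecLin else ⊤
  have hW1 : ∀ i, i ≤ j → W i = LinearMap.range (β i).mulVecLin := fun i hi => if_pos hi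
  have hW2 : ∀ i, j < i → W i = ⊤ := fun i hi => if_neg (by omega)
  obtain ⟨P, hP1, hP2, hr⟩ := qs_subrep m dims α β hcl W
    (fun i hi x hx => by
      rcases Nat.lt_or_ge j (i+1) with h | h
      · rw [hW2 _ h]; trivial
      · rw [hW1 i (by omega)] at hx
        obtain ⟨y, rfl⟩ := hx
        rw [hW1 _ h, Matrix.mulVecLin_apply, Matrix.mulVec_mulVec,
          hmm0 i (by omega), ← Matrix.mulVec_mulVec]
        exact ⟨_, rfl⟩)
    (fun i hi x hx => by
      rcases Nat.lt_or_ge j i with h | h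
      · rw [hW2 _ h]; trivial
      · rw [hW1 i h]; exact ⟨x, rfl⟩)
    (Or.inr (hW2 _ (by omega)))
  have hP0 : P (j+1) = 1 := by
    apply Matrix.ext_of_mulVec_single
    intro k
    rw [hP2 _ _ (by rw [hW2 _ (by omega)]; trivial), Matrix.one_mulVec]
  have h := (hr j hj).1
  rw [hP0, Matrix.one_mul, sub_self, Matrix.zero_mul, Matrix.zero_mul, add_zero] at h
  have hk : LinearMap.range (α j * P j).mulVecLin = LinearMap.range (α j).mulVecLin := by
    apply Submodule.eq_of_le_of_finrank_eq
    · rintro _ ⟨x, rfl⟩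
      exact ⟨(P j).mulVec x, by simp [Matrix.mulVec_mulVec]⟩
    · exact h
  rw [codisjoint_iff, eq_top_iff]
  intro x _
  have hx : (α j).mulVecLin x ∈ LinearMap.range (α j * P j).mulVecLin := by
    rw [hk]; exact ⟨x, rfl⟩
  obtain ⟨y, hy⟩ := hx
  refine Submodule.mem_sup.2 ⟨x - (P j).mulVec y, ?_, (P j).mulVec y, ?_, by simp⟩
  · rw [LinearMap.mem_ker, map_sub, ← hy, Matrix.mulVecLin_apply, Matrix.mulVecLin_apply,
      Matrix.mulVec_mulVec, sub_self]
  · rw [← hW1 j le_rfl]; exact hP1 j y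

/-- (Here the paper's `r` is `m + 1`, so `r ≥ 2` is `1 ≤ m`;
the quiver maps are `α i : ℂ^(dims i) → ℂ^(dims (i+1))` and
`β i : ℂ^(dims (i+1)) → ℂ^(dims i)` for `i = 0, …, m`, with `dims 0 = 0`.
The complex moment map equations at level zero for `∏ GL(dims i, ℂ)` read
`α_j β_j = β_{j+1} α_{j+1}` for `j < m`.  The group element acts with
`g_{m+1} = 1`, and components of index `> m` are unaffected.)

The orbit of `(α, β)` under `∏_{i=1}^{m} GL(dims i, ℂ)` is closed in the
product matrix space if and only if, for every `i = 1, …, m`, the space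
`ℂ^(dims i)` is the internal direct sum of `ker α_i` and `range β_i`. -/
theorem statement14 (m : ℕ) (hm : 1 ≤ m) (dims : ℕ → ℕ) (h0 : dims 0 = 0)
    (hmono : ∀ i ≤ m, dims i ≤ dims (i+1))
    (α : ∀ i : ℕ, Matrix (Fin (dims (i+1))) (Fin (dims i)) ℂ)
    (β : ∀ i : ℕ, Matrix (Fin (dims i)) (Fin (dims (i+1))) ℂ)
    (hmm0 : ∀ j < m, α j * β j = β (j+1) * α (j+1)) :
    IsClosed {q : (∀ i : ℕ, Matrix (Fin (dims (i+1))) (Fin (dims i)) ℂ) ×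
          (∀ i : ℕ, Matrix (Fin (dims i)) (Fin (dims (i+1))) ℂ) |
        ∃ g : ∀ i : ℕ, Matrix.GeneralLinearGroup (Fin (dims i)) ℂ,
          g (m+1) = 1 ∧
          (∀ i ≤ m, q.1 i = glActA dims g α i ∧ q.2 i = glActB dims g β i) ∧
          (∀ i, m + 1 ≤ i → q.1 i = α i ∧ q.2 i = β i)} ↔
      ∀ i, 1 ≤ i → i ≤ m →
        IsCompl (LinearMap.ker (α i).mulVecLin) (LinearMap.range (β i).mulVecLin) := by
  constructor
  · intro h i _ hi
    exact ⟨qs_disjoint m dims α β hmm0 h i hi, qs_codisjoint m dims α β hmm0 h i hi⟩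
  · intro h
    exact qs_backward m dims h0 α β hmm0 h
end

section
/- Let D be a diagonal n×n complex matrix. (1) Surjectivity: every n×n complex matrix X whose characteristic polynomial equals the characteristic polynomial of D is similar to D + N for some strictly upper triangular matrix N, i.e., X = Q (D + N) Q⁻¹ for some Q ∈ GL(n,ℂ). (2) Injectivity over regular elements: if N, N' are strictly upper triangular, g ∈ GL(n,ℂ) satisfies g (D + N) g⁻¹ = D + N', and D + N is regular (its minimal polynomial equals its characteristic polynomial), then g is upper triangular. -/
open Polynomial Matrix

lemma exists_first_col {n : ℕ} (v : Fin (n+1) → ℂ) (hv : v ≠ 0) :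
    ∃ P : Matrix (Fin (n+1)) (Fin (n+1)) ℂ, IsUnit P.det ∧ ∀ i, P i 0 = v i := by
  obtain ⟨i0, hi0⟩ := Function.ne_iff.mp hv
  refine ⟨((1 : Matrix (Fin (n+1)) (Fin (n+1)) ℂ).updateCol i0 v).submatrix id
    (Equiv.swap 0 i0), ?_, ?_⟩
  · rw [Matrix.det_permute', ← Matrix.cramer_apply, Matrix.cramer_one]
    simp only [isUnit_iff_ne_zero]
    refine mul_ne_zero ?_ (by simpa using hi0)
    exact_mod_cast (Equiv.Perm.sign (Equiv.swap 0 i0)).ne_zero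
  · intro i
    simp

lemma charpoly_first_col {n : ℕ} (Y : Matrix (Fin (n+1)) (Fin (n+1)) ℂ)
    (h : ∀ i : Fin n, Y i.succ 0 = 0) :
    Y.charpoly = (X - C (Y 0 0)) * (Y.submatrix Fin.succ Fin.succ).charpoly := by
  have e : (Y.submatrix Fin.succ Fin.succ).charmatrix =
      Y.charmatrix.submatrix Fin.succ Fin.succ := by
    ext1 i j
    simp [Matrix.charmatrix_apply, Matrix.diagonal_apply]
  rw [Matrix.charpoly, Matrix.det_succ_column_zero, Fin.sum_univ_succ, Finset.sum_eq_zero]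
  · rw [Matrix.charpoly, e]
    have : Fin.succAbove (0 : Fin (n+1)) = Fin.succ := by ext; simp
    simp [this, Matrix.charmatrix_apply]
  · intro i _
    rw [Matrix.charmatrix_apply, h i]
    simp [Matrix.diagonal_apply]

lemma triang : ∀ (n : ℕ) (d : Fin n → ℂ) (M : Matrix (Fin n) (Fin n) ℂ),
    M.charpoly = ∏ i, (X - C (d i)) →
    ∃ Q T : Matrix (Fin n) (Fin n) ℂ, IsUnit Q.det ∧ M * Q = Q * T ∧
      (∀ i, T i i = d i) ∧ ∀ i j, j < i → T i j = 0 := by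
  intro n
  induction n with
  | zero =>
    intro d M _
    exact ⟨1, M, by simp, by simp, fun i => i.elim0, fun i => i.elim0⟩
  | succ n ih =>
    intro d M hM
    have h0 : (Matrix.scalar _ (d 0) - M).det = 0 := by
      rw [← Matrix.eval_charpoly, hM, Polynomial.eval_prod]
      exact Finset.prod_eq_zero (Finset.mem_univ 0) (by simp)
    obtain ⟨v, hv, hv0⟩ := Matrix.exists_mulVec_eq_zero_iff.mpr h0
    have hMv : M *ᵥ v = d 0 • v := by
      rw [Matrix.sub_mulVec, sub_eq_zero] at hv0
      rw [← hv0]; ext; simp [Matrix.scalar_apply, Matrix.mulVec_diagonal]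
    obtain ⟨P, hP, hP0⟩ := exists_first_col v hv
    have hPv : P *ᵥ Pi.single 0 1 = v := by
      ext i; simp [hP0]
    set Y := P⁻¹ * M * P with hY
    have hPY : M * P = P * Y := by
      rw [hY, Matrix.mul_assoc, Matrix.mul_nonsing_inv_cancel_left _ _ hP]
    have hYc : Y *ᵥ Pi.single 0 1 = d 0 • Pi.single 0 1 := by
      rw [hY, ← Matrix.mulVec_mulVec, hPv, ← Matrix.mulVec_mulVec, hMv, Matrix.mulVec_smul,
        ← hPv, Matrix.mulVec_mulVec, Matrix.nonsing_inv_mul _ hP, Matrix.one_mulVec]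
    have hY00 : Y 0 0 = d 0 := by simpa using congrFun hYc 0
    have hYs : ∀ i : Fin n, Y i.succ 0 = 0 := fun i => by simpa using congrFun hYc i.succ
    have hYchar : Y.charpoly = M.charpoly := by
      have := Matrix.charpoly_units_conj' ((Matrix.isUnit_iff_isUnit_det P).mpr hP).unit M
      rwa [IsUnit.unit_spec] at this
    clear_value Y
    have hc := charpoly_first_col Y hYs
    rw [hYchar, hM, Fin.prod_univ_succ, hY00] at hc
    have hc' := mul_left_cancel₀ (Polynomial.X_sub_C_ne_zero (d 0)) hc
    obtain ⟨Q', T', hQ', hYQ, hTd, hTu⟩ := ih (fun i => d i.succ) _ hc'.symm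
    let Q : Matrix (Fin (n+1)) (Fin (n+1)) ℂ :=
      Matrix.of (Fin.cons (Fin.cons 1 0) (fun i => Fin.cons 0 (Q' i)))
    let T : Matrix (Fin (n+1)) (Fin (n+1)) ℂ :=
      Matrix.of (Fin.cons (Fin.cons (d 0) (fun j => ∑ k, Y 0 (Fin.succ k) * Q' k j))
        (fun i => Fin.cons 0 (T' i)))
    have hQdet : Q.det = Q'.det := by
      rw [Matrix.det_succ_column_zero, Fin.sum_univ_succ, Finset.sum_eq_zero]
      · have : Fin.succAbove (0 : Fin (n+1)) = Fin.succ := by ext; simp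
        have e : Q.submatrix Fin.succ Fin.succ = Q' := by ext i j; simp [Q]
        rw [this, e]; simp [Q]
      · intro i _; simp [Q]
    refine ⟨P * Q, T, ?_, ?_, ?_, ?_⟩
    · rw [Matrix.det_mul, hQdet]; exact hP.mul hQ'
    · rw [← Matrix.mul_assoc, hPY, Matrix.mul_assoc P Y Q, Matrix.mul_assoc P Q T]
      congr 1
      ext i j
      have key : ∀ i j, ∑ k : Fin n, Y i.succ (Fin.succ k) * Q' k j = ∑ k, Q' i k * T' k j := by
        intro i j
        simpa [Matrix.mul_apply] using congrFun (congrFun hYQ i) j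
      refine Fin.cases ?_ (fun i => ?_) i <;> refine Fin.cases ?_ (fun j => ?_) j <;>
        simp [Matrix.mul_apply, Fin.sum_univ_succ, Q, T, hY00, hYs, key]
    · intro i
      refine Fin.cases ?_ (fun i => ?_) i <;> simp [T, hTd]
    · intro i j
      refine Fin.cases ?_ (fun i => ?_) i <;> refine Fin.cases ?_ (fun j => ?_) j <;> simp [T]
      exact hTu i j

lemma finrank_ker_le {V : Type*} [AddCommGroup V] [Module ℂ V] [FiniteDimensional ℂ V]
    (f : Module.End ℂ V) (hf : Module.finrank ℂ V ≤ (minpoly ℂ f).natDegree)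
    (p : ℂ[X]) (hp : p.Monic) :
    Module.finrank ℂ (LinearMap.ker (aeval f p)) ≤ p.natDegree := by
  set W := LinearMap.range (aeval f p) with hW
  have hinv : ∀ x ∈ W, f x ∈ W := by
    rintro _ ⟨y, rfl⟩
    refine ⟨f y, ?_⟩
    have : aeval f (p * X) = aeval f (X * p) := by rw [mul_comm]
    simpa using LinearMap.congr_fun this y
  set r := f.restrict hinv
  have hq : aeval f (r.charpoly * p) = 0 := by
    ext v
    rw [map_mul, Module.End.mul_apply]
    have hr : ∀ (q : ℂ[X]) (w : W), ((aeval r q w : W) : V) = aeval f q (w : V) := by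
      intro q w
      induction q using Polynomial.induction_on' with
      | add a b ha hb => simp [ha, hb]
      | monomial k a =>
        simp only [aeval_monomial, Module.End.mul_apply, Module.algebraMap_end_apply,
          Submodule.coe_smul]
        congr 1
        induction k generalizing w with
        | zero => simp
        | succ k ih => 
          rw [pow_succ, pow_succ, Module.End.mul_apply, Module.End.mul_apply, ih]
          rfl
    have := hr r.charpoly ⟨aeval f p v, v, rfl⟩
    rw [LinearMap.aeval_self_charpoly] at this
    simpa using this.symm
  have hm : (r.charpoly * p).Monic := (LinearMap.charpoly_monic r).mul hp
  have h1 := Polynomial.natDegree_le_of_dvd (minpoly.dvd ℂ f hq) hm.ne_zero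
  rw [(LinearMap.charpoly_monic r).natDegree_mul hp, LinearMap.charpoly_natDegree] at h1
  have h2 := LinearMap.finrank_range_add_finrank_ker (aeval f p)
  rw [← hW] at h2
  omega

/-- product of the first `k` linear factors -/
noncomputable def pk {n : ℕ} (d : Fin n → ℂ) (k : ℕ) : ℂ[X] :=
  ∏ i ∈ Finset.univ.filter (fun i : Fin n => i.val < k), (X - C (d i))

lemma pk_monic {n : ℕ} (d : Fin n → ℂ) (k : ℕ) : (pk d k).Monic :=
  monic_prod_of_monic _ _ fun i _ => monic_X_sub_C _

lemma pk_natDegree {n : ℕ} (d : Fin n → ℂ) (k : ℕ) : (pk d k).natDegree =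
    (Finset.univ.filter (fun i : Fin n => i.val < k)).card := by
  rw [pk, natDegree_prod_of_monic _ _ fun i _ => monic_X_sub_C _]; simp

lemma pk_kills {n : ℕ} (d : Fin n → ℂ) (A : Matrix (Fin n) (Fin n) ℂ)
    (hd : ∀ i, A i i = d i) (hu : ∀ i j, j < i → A i j = 0) (k : ℕ) :
    ∀ v : Fin n → ℂ, (∀ i : Fin n, k ≤ i.val → v i = 0) →
      aeval (Matrix.toLin' A) (pk d k) v = 0 := by
  induction k with
  | zero =>
    intro v hv
    rw [show v = 0 from funext fun i => hv i (Nat.zero_le _), map_zero]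
  | succ k ih =>
    intro v hv
    by_cases hk : k < n
    · have e : pk d (k+1) = pk d k * (X - C (d ⟨k, hk⟩)) := by
        have : Finset.univ.filter (fun i : Fin n => i.val < k+1) =
            insert ⟨k, hk⟩ (Finset.univ.filter (fun i : Fin n => i.val < k)) := by
          ext i; simp [Fin.ext_iff]; omega
        rw [pk, this, Finset.prod_insert (by simp), mul_comm, pk]
      rw [e, map_mul, Module.End.mul_apply]
      apply ih
      intro i hi
      have : A.mulVec v i = A i i * v i := by
        rw [Matrix.mulVec, dotProduct, Finset.sum_eq_single i]
        · intro j _ hj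
          rcases lt_or_gt_of_ne hj with h | h
          · rw [hu i j h, zero_mul]
          · rw [hv j (by have : i.val < j.val := h
                         omega), mul_zero]
        · simp
      simp only [map_sub, aeval_X, aeval_C, LinearMap.sub_apply, Matrix.toLin'_apply,
        Module.algebraMap_end_apply, Pi.sub_apply, Pi.smul_apply, smul_eq_mul, this, hd]
      rcases Nat.eq_or_lt_of_le hi with h | h
      · have : i = ⟨k, hk⟩ := Fin.ext h.symm
        rw [this, sub_self]
      · rw [hv i h]; simp
    · have e : pk d (k+1) = pk d k := by
        unfold pk
        congr 1
        ext i; simp; omega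
      rw [e]
      exact ih v fun i hi => by omega

lemma ker_pk {n : ℕ} (d : Fin n → ℂ) (A : Matrix (Fin n) (Fin n) ℂ)
    (hd : ∀ i, A i i = d i) (hu : ∀ i j, j < i → A i j = 0) 
    (hm : minpoly ℂ A = A.charpoly) (k : ℕ) (v : Fin n → ℂ)
    (hv : aeval (Matrix.toLin' A) (pk d k) v = 0) (i : Fin n) (hi : k ≤ i.val) : v i = 0 := by
  set s : Finset (Fin n) := Finset.univ.filter (fun i : Fin n => i.val < k) with hs
  set U := Submodule.span ℂ ((Pi.basisFun ℂ (Fin n)) '' (s : Set (Fin n))) with hU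
  have hUmem : ∀ w, w ∈ U ↔ ∀ i : Fin n, k ≤ i.val → w i = 0 := by
    intro w
    rw [hU, Module.Basis.mem_span_image]
    simp only [Set.subset_def, Finset.mem_coe, Finsupp.mem_support_iff, Pi.basisFun_repr, hs,
      Finset.mem_filter, Finset.mem_univ, true_and]
    refine forall_congr' fun i => ?_
    rw [← not_le, not_imp_not]
  have hUr : Module.finrank ℂ U = s.card := by
    have h := ((Pi.basisFun ℂ (Fin n)).linearIndepOn (s : Set (Fin n))).id_image
    rw [hU, finrank_span_set_eq_card h, Set.toFinset_card, 
      Set.card_image_of_injective _ (Pi.basisFun ℂ (Fin n)).injective]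
    simp
  have hle : U ≤ LinearMap.ker (aeval (Matrix.toLin' A) (pk d k)) := fun w hw =>
    pk_kills d A hd hu k w ((hUmem w).mp hw)
  have hr := finrank_ker_le (Matrix.toLin' A)
    (by rw [Matrix.minpoly_toLin', hm, Matrix.charpoly_natDegree_eq_dim]; simp) _ (pk_monic d k)
  rw [pk_natDegree, ← hUr] at hr
  have := Submodule.eq_of_le_of_finrank_le hle hr
  exact (hUmem v).mp (by rw [this]; exact hv) i hi

/-- Let `D` be a diagonal `n × n` complex matrix.
(1) Surjectivity: every `n × n` complex matrix `X` whose characteristic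
polynomial equals that of `D` can be written as `X = Q (D + N) Q⁻¹` with
`Q ∈ GL(n, ℂ)` and `N` strictly upper triangular.
(2) Injectivity over regular elements: if `N, N'` are strictly upper
triangular, `g ∈ GL(n, ℂ)` satisfies `g (D + N) g⁻¹ = D + N'`, and `D + N` is
regular (its minimal polynomial equals its characteristic polynomial), then
`g` is upper triangular. -/
theorem statement16 (n : ℕ) (D : Matrix (Fin n) (Fin n) ℂ) (hD : D.IsDiag) :
    (∀ X : Matrix (Fin n) (Fin n) ℂ, X.charpoly = D.charpoly →
      ∃ (N : Matrix (Fin n) (Fin n) ℂ) (Q : Matrix.GeneralLinearGroup (Fin n) ℂ),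
        (∀ i j : Fin n, j ≤ i → N i j = 0) ∧
        X = (↑Q : Matrix (Fin n) (Fin n) ℂ) * (D + N) *
          (↑(Q⁻¹) : Matrix (Fin n) (Fin n) ℂ)) ∧
    (∀ (N N' : Matrix (Fin n) (Fin n) ℂ) (g : Matrix.GeneralLinearGroup (Fin n) ℂ),
      (∀ i j : Fin n, j ≤ i → N i j = 0) →
      (∀ i j : Fin n, j ≤ i → N' i j = 0) →
      (↑g : Matrix (Fin n) (Fin n) ℂ) * (D + N) *
          (↑(g⁻¹) : Matrix (Fin n) (Fin n) ℂ) = D + N' →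
      minpoly ℂ (D + N) = (D + N).charpoly →
      ∀ i j : Fin n, j < i → (↑g : Matrix (Fin n) (Fin n) ℂ) i j = 0) := by
  have hdet : ∀ Q : Matrix.GeneralLinearGroup (Fin n) ℂ,
      (↑Q : Matrix (Fin n) (Fin n) ℂ) * (↑(Q⁻¹) : Matrix (Fin n) (Fin n) ℂ) = 1 := fun Q => by
    rw [← Units.val_mul, mul_inv_cancel, Units.val_one]
  have hdet' : ∀ Q : Matrix.GeneralLinearGroup (Fin n) ℂ,
      (↑(Q⁻¹) : Matrix (Fin n) (Fin n) ℂ) * (↑Q : Matrix (Fin n) (Fin n) ℂ) = 1 := fun Q => by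
    rw [← Units.val_mul, inv_mul_cancel, Units.val_one]
  constructor
  · intro M hM
    have hDc : D.charpoly = ∏ i, (Polynomial.X - Polynomial.C (D i i)) :=
      Matrix.charpoly_of_upperTriangular D (fun i j h => hD (ne_of_gt h))
    obtain ⟨Q, T, hQ, hMQ, hTd, hTu⟩ := triang n (fun i => D i i) M (hM.trans hDc)
    refine ⟨T - D, ((Matrix.isUnit_iff_isUnit_det Q).mpr hQ).unit, ?_, ?_⟩
    · intro i j hij
      rcases eq_or_lt_of_le hij with h | h
      · subst h; simp [hTd]
      · simp [hTu i j h, hD (ne_of_gt h)]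
    · rw [add_sub_cancel]
      have h := hdet ((Matrix.isUnit_iff_isUnit_det Q).mpr hQ).unit
      rw [IsUnit.unit_spec] at h ⊢
      rw [← hMQ, Matrix.mul_assoc, h, Matrix.mul_one]
  · intro N N' g hN hN' hg hm i j hij
    have hcomm : (↑g : Matrix (Fin n) (Fin n) ℂ) * (D + N) = (D + N') * (↑g : Matrix (Fin n) (Fin n) ℂ) := by
      rw [← hg, Matrix.mul_assoc _ _ (↑g : Matrix (Fin n) (Fin n) ℂ), hdet', Matrix.mul_one]
    have hd : ∀ i, (D + N) i i = D i i := fun i => by simp [hN i i le_rfl]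
    have hd' : ∀ i, (D + N') i i = D i i := fun i => by simp [hN' i i le_rfl]
    have hu : ∀ i j, j < i → (D + N) i j = 0 := fun i j h => by
      simp [hN i j h.le, hD (ne_of_gt h)]
    have hu' : ∀ i j, j < i → (D + N') i j = 0 := fun i j h => by
      simp [hN' i j h.le, hD (ne_of_gt h)]
    have hpow : ∀ k : ℕ, (↑g : Matrix (Fin n) (Fin n) ℂ) * (D + N) ^ k = (D + N') ^ k * (↑g : Matrix (Fin n) (Fin n) ℂ) :=
      fun k => (show SemiconjBy _ _ _ from hcomm).pow_right k
    have hpoly : ∀ p : Polynomial ℂ, (↑g : Matrix (Fin n) (Fin n) ℂ) * Polynomial.aeval (D + N) p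
        = Polynomial.aeval (D + N') p * (↑g : Matrix (Fin n) (Fin n) ℂ) := by
      intro p
      induction p using Polynomial.induction_on' with
      | add a b ha hb => simp [mul_add, add_mul, ha, hb]
      | monomial k a =>
        rw [Polynomial.aeval_monomial, Polynomial.aeval_monomial, ← Algebra.smul_def,
          ← Algebra.smul_def, mul_smul_comm, hpow, smul_mul_assoc]
    have hchar : (D + N').charpoly = (D + N).charpoly := by
      rw [← hg, Matrix.coe_units_inv]; exact Matrix.charpoly_units_conj g (D + N)
    have hmin : minpoly ℂ (D + N') = (D + N').charpoly := by
      rw [hchar, ← hm]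
      refine Polynomial.eq_of_monic_of_associated (minpoly.monic (Matrix.isIntegral _))
        (minpoly.monic (Matrix.isIntegral _)) (associated_of_dvd_dvd ?_ ?_)
      · apply minpoly.dvd
        have h := hpoly (minpoly ℂ (D + N))
        rw [minpoly.aeval, mul_zero] at h
        have h2 := congrArg (· * (↑(g⁻¹) : Matrix (Fin n) (Fin n) ℂ)) h
        simpa [Matrix.mul_assoc, hdet] using h2.symm
      · apply minpoly.dvd
        have h := hpoly (minpoly ℂ (D + N'))
        rw [minpoly.aeval, zero_mul] at h
        have h2 := congrArg ((↑(g⁻¹) : Matrix (Fin n) (Fin n) ℂ) * ·) h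
        simpa [← Matrix.mul_assoc, hdet'] using h2
    have hlin : ∀ (A : Matrix (Fin n) (Fin n) ℂ) (p : Polynomial ℂ) (v : Fin n → ℂ),
        Polynomial.aeval (Matrix.toLin' A) p v = (Polynomial.aeval A p) *ᵥ v := by
      intro A p v
      have : Polynomial.aeval (Matrix.toLinAlgEquiv' A) p =
        Matrix.toLinAlgEquiv' (Polynomial.aeval A p) :=
        Polynomial.aeval_algHom_apply (Matrix.toLinAlgEquiv' (R := ℂ) (n := Fin n)) A p
      exact LinearMap.congr_fun this v
    have h1 := pk_kills (fun i => D i i) (D + N) hd hu (j.val + 1) (Pi.single j 1)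
      (fun l hl => Pi.single_eq_of_ne (by intro h; rw [h] at hl; omega) _)
    have h2 := ker_pk (fun i => D i i) (D + N') hd' hu' hmin (j.val + 1)
      ((↑g : Matrix (Fin n) (Fin n) ℂ) *ᵥ Pi.single j 1)
      (by
        rw [hlin] at h1 ⊢
        rw [Matrix.mulVec_mulVec, ← hpoly, ← Matrix.mulVec_mulVec, h1, Matrix.mulVec_zero])
      i (by have : j.val < i.val := hij
            omega)
    simpa using h2
end
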